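/- For every 0 < τ < √2, every integer T ≥ 1, and every ε > 0, there exists d₀ such that the following holds for all d ≥ d₀. Let w₁, …, w_m ≥ 0 with Σᵢ wᵢ = 1, and let h₁, …, h_m be measurable functions on the unit sphere S^{d−1} (with normalized Haar/uniform measure μ) such that each hᵢ takes at most T distinct values and each level set of each hᵢ has measure at most 1/2. Define p₂* = Σᵢ wᵢ · Pr_{u,v ~ μ, independent}[hᵢ(u) = hᵢ(v)], and let η ∈ ℝ satisfy Φ_c(η) = p₂*. Then for every pair p, q ∈ S^{d−1} with ‖p − q‖ ≤ τ: Σᵢ wᵢ · 1[hᵢ(p) = hᵢ(q)] being at least p₁ for all such pairs forces p₁ ≤ Λ(τ, η) + ε; equivalently, inf_{p,q ∈ S^{d−1}, ‖p−q‖ ≤ τ} Σᵢ wᵢ · 1[hᵢ(p) = hᵢ(q)] ≤ Λ(τ, η) + ε. -/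

import Mathlib

open MeasureTheory ProbabilityTheory Real
open scoped Classical

noncomputable section

/-- The normalized uniform (Haar) measure on the unit sphere `S^{d-1} ⊆ ℝ^d`. -/
def sphereMeasure (d : ℕ) : Measure (Metric.sphere (0 : EuclideanSpace ℝ (Fin d)) 1) :=
  ((volume : Measure (EuclideanSpace ℝ (Fin d))).toSphere Set.univ)⁻¹
    • (volume : Measure (EuclideanSpace ℝ (Fin d))).toSphere

/-- `Φ_c(η) = Pr_{X ~ N(0,1)}[X ≥ η]`. -/
def gaussTail (η : ℝ) : ℝ := (gaussianReal 0 1 (Set.Ici η)).toReal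

/-- `Λ(τ, η) = Pr[X ≥ η ∧ (1 - τ²/2)X + √(τ² - τ⁴/4)·Y ≥ η] / Φ_c(η)` for independent
standard Gaussians `X, Y`. -/
def lambdaFn (τ η : ℝ) : ℝ :=
  (((gaussianReal 0 1).prod (gaussianReal 0 1))
      {z : ℝ × ℝ | η ≤ z.1 ∧
        η ≤ (1 - τ ^ 2 / 2) * z.1 + Real.sqrt (τ ^ 2 - τ ^ 4 / 4) * z.2}).toReal
    / gaussTail η

namespace LSH
open Set Filter Topology

/-- standard Gaussian density -/
def phi (x : ℝ) : ℝ := gaussianPDFReal 0 1 x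

lemma phi_eq (x : ℝ) : phi x = (√(2 * π))⁻¹ * exp (-x ^ 2 / 2) := by
  simp [phi, gaussianPDFReal]

lemma phi_pos (x : ℝ) : 0 < phi x := gaussianPDFReal_pos _ _ _ (by norm_num)

lemma phi_const_le : (√(2 * π))⁻¹ ≤ 1 := by
  apply inv_le_one_of_one_le₀
  rw [Real.one_le_sqrt]
  nlinarith [Real.pi_gt_three]

lemma phi_le_one (x : ℝ) : phi x ≤ 1 := by
  rw [phi_eq]
  have h1 : exp (-x ^ 2 / 2) ≤ 1 := by
    rw [Real.exp_le_one_iff]; nlinarith [sq_nonneg x]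
  have := phi_const_le
  have h3 : 0 ≤ (√(2 * π))⁻¹ := by positivity
  have h4 := Real.exp_pos (-x ^ 2 / 2)
  nlinarith

lemma phi_hasDerivAt (x : ℝ) : HasDerivAt phi (-x * phi x) x := by
  have : phi = fun x => (√(2 * π))⁻¹ * exp (-x ^ 2 / 2) := funext phi_eq
  rw [this]
  have h := (((hasDerivAt_id x).pow 2).neg.div_const 2).exp.const_mul ((√(2 * π))⁻¹)
  refine h.congr_deriv ?_
  simp
  ring

lemma phi_continuous : Continuous phi :=
  continuous_iff_continuousAt.2 fun x => (phi_hasDerivAt x).continuousAt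

lemma abs_mul_phi_le (x : ℝ) : |(-x) * phi x| ≤ 1 := by
  rw [abs_mul, abs_neg, abs_of_pos (phi_pos x), phi_eq]
  have h1 : |x| * exp (-x ^ 2 / 2) ≤ 1 := by
    have : |x| ≤ exp (x^2/2) := by
      have := Real.add_one_le_exp (x^2/2)
      nlinarith [sq_nonneg (|x| - 1), sq_abs x]
    have h2 : exp (-x ^ 2 / 2) = (exp (x^2/2))⁻¹ := by
      rw [← Real.exp_neg]; congr 1; ring
    rw [h2]
    have h3 := Real.exp_pos (x^2/2)
    rw [← div_eq_mul_inv, div_le_one h3]; exact this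
  have := phi_const_le
  have h3 : 0 ≤ (√(2 * π))⁻¹ := by positivity
  have h4 : 0 ≤ |x| * exp (-x ^ 2 / 2) := by positivity
  nlinarith

lemma phi_lipschitz (x y : ℝ) : |phi y - phi x| ≤ |y - x| := by
  have := Convex.norm_image_sub_le_of_norm_hasDerivWithin_le (f := phi) (f' := fun x => -x * phi x)
    (s := univ) (C := 1) (x := x) (y := y) (fun z _ => (phi_hasDerivAt z).hasDerivWithinAt)
    (fun z _ => by rw [Real.norm_eq_abs]; exact abs_mul_phi_le z) convex_univ trivial trivial
  simpa using this

lemma phi_integrable : Integrable phi := integrable_gaussianPDFReal 0 1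

lemma U_eq (x : ℝ) : gaussTail x = ∫ u in Ici x, phi u := by
  rw [gaussTail, gaussianReal_apply_eq_integral _ (by norm_num)]
  rw [ENNReal.toReal_ofReal]
  · rfl
  · exact integral_nonneg fun u => gaussianPDFReal_nonneg _ _ _

lemma U_eq_Ioi (x : ℝ) : gaussTail x = ∫ u in Ioi x, phi u := by
  rw [U_eq, integral_Ici_eq_integral_Ioi]

lemma U_sub (a b : ℝ) : gaussTail a - gaussTail b = ∫ u in a..b, phi u := by
  rw [U_eq_Ioi, U_eq_Ioi]
  exact intervalIntegral.integral_Ioi_sub_Ioi' phi_integrable.integrableOn phi_integrable.integrableOn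

lemma U_hasDerivAt (x : ℝ) : HasDerivAt gaussTail (-phi x) x := by
  have h : gaussTail = fun y => gaussTail 0 - ∫ u in (0:ℝ)..y, phi u := by
    funext y; rw [← U_sub]; ring
  rw [h]
  have := intervalIntegral.integral_hasDerivAt_right (f := phi) (a := 0) (b := x)
    (phi_continuous.intervalIntegrable _ _) (phi_continuous.stronglyMeasurableAtFilter _ _)
    phi_continuous.continuousAt
  simpa using this.const_sub (gaussTail 0)

lemma U_continuous : Continuous gaussTail :=
  continuous_iff_continuousAt.2 fun x => (U_hasDerivAt x).continuousAt

lemma U_strictAnti : StrictAnti gaussTail :=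
  strictAnti_of_deriv_neg fun x => by rw [(U_hasDerivAt x).deriv]; linarith [phi_pos x]

lemma U_lipschitz (x y : ℝ) : |gaussTail y - gaussTail x| ≤ |y - x| := by
  have := Convex.norm_image_sub_le_of_norm_hasDerivWithin_le (f := gaussTail) (f' := fun x => -phi x)
    (s := univ) (C := 1) (x := x) (y := y) (fun z _ => (U_hasDerivAt z).hasDerivWithinAt)
    (fun z _ => by rw [Real.norm_eq_abs, abs_neg, abs_of_pos (phi_pos z)]; exact phi_le_one z)
    convex_univ trivial trivial
  simpa using this

lemma U_tendsto_atTop : Tendsto gaussTail atTop (𝓝 0) := by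
  have h : gaussTail = fun y => gaussTail 0 - ∫ u in (0:ℝ)..y, phi u := by
    funext y; rw [← U_sub]; ring
  rw [h]
  have := intervalIntegral_tendsto_integral_Ioi (f := phi) 0 phi_integrable.integrableOn tendsto_id
  rw [← U_eq_Ioi] at this
  simpa using this.const_sub (gaussTail 0)

lemma U_neg (x : ℝ) : gaussTail (-x) = 1 - gaussTail x := by
  have h1 : (gaussianReal 0 1) (Ici (-x)) = (gaussianReal 0 1) (Iic x) := by
    have := gaussianReal_map_neg (μ := 0) (v := 1)
    rw [neg_zero] at this
    nth_rw 1 [← this]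
    rw [Measure.map_apply (by fun_prop) measurableSet_Ici]
    congr 1; ext y; simp
  have h2 : (gaussianReal 0 1) (Iic x) = (gaussianReal 0 1) (Iio x) := by
    have : NullSingletonClass (gaussianReal 0 1) := nullSingletonClass_gaussianReal (by norm_num)
    exact measure_congr Iio_ae_eq_Iic.symm
  rw [gaussTail, gaussTail, h1, h2, ← compl_Ici, prob_compl_eq_one_sub measurableSet_Ici,
    ENNReal.toReal_sub_of_le prob_le_one ENNReal.one_ne_top]
  simp

lemma U_zero : gaussTail 0 = 1 / 2 := by
  have := U_neg 0
  rw [neg_zero] at this; linarith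

lemma U_pos (x : ℝ) : 0 < gaussTail x := by
  have h : 0 ≤ gaussTail (x+1) := ENNReal.toReal_nonneg
  exact h.trans_lt (U_strictAnti (by linarith))

lemma U_lt_one (x : ℝ) : gaussTail x < 1 := by
  have := U_pos (-x); rw [U_neg] at this; linarith

lemma U_surj {y : ℝ} (h0 : 0 < y) (h1 : y < 1) : ∃ x, gaussTail x = y := by
  obtain ⟨a, ha⟩ := ((U_tendsto_atTop.eventually (gt_mem_nhds h0))).exists
  obtain ⟨b, hb⟩ := ((U_tendsto_atTop.eventually (gt_mem_nhds (sub_pos.2 h1)))).exists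
  have hb' : y < gaussTail (-b) := by rw [U_neg]; linarith
  exact mem_range_of_exists_le_of_exists_ge U_continuous ⟨a, ha.le⟩ ⟨-b, hb'.le⟩

/-- inverse of the tail function -/
def Q (y : ℝ) : ℝ := if h : 0 < y ∧ y < 1 then (U_surj h.1 h.2).choose else 0

lemma U_Q {y : ℝ} (h0 : 0 < y) (h1 : y < 1) : gaussTail (Q y) = y := by
  rw [Q, dif_pos ⟨h0, h1⟩]; exact (U_surj h0 h1).choose_spec

lemma Q_U (x : ℝ) : Q (gaussTail x) = x := U_strictAnti.injective (U_Q (U_pos x) (U_lt_one x))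

/-- second-order expansion of U -/
lemma U_taylor (x y : ℝ) : |gaussTail y - gaussTail x + phi x * (y - x)| ≤ (y - x) ^ 2 := by
  -- bound along segment
  have key := Convex.norm_image_sub_le_of_norm_hasDerivWithin_le
    (f := fun z => gaussTail z + phi x * z) (f' := fun z => -phi z + phi x)
    (s := uIcc x y) (C := |y - x|) (x := x) (y := y)
    (fun z _ => ((U_hasDerivAt z).add (by simpa using (hasDerivAt_id z).const_mul (phi x))).hasDerivWithinAt)
    (fun z hz => by
      rw [Real.norm_eq_abs]
      have h1 := phi_lipschitz z x
      have h2 : |x - z| ≤ |y - x| := by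
        rw [abs_sub_comm x z]
        exact abs_sub_left_of_mem_uIcc hz
      calc _ = |phi x - phi z| := by congr 1; ring
        _ ≤ _ := h1.trans h2)
    (convex_uIcc x y) left_mem_uIcc right_mem_uIcc
  rw [Real.norm_eq_abs, Real.norm_eq_abs, ← sq, sq_abs] at key
  calc _ = |gaussTail y + phi x * y - (gaussTail x + phi x * x)| := by congr 1; ring
    _ ≤ _ := key

end LSH

namespace LSH
open Set Filter Topology

/-- standard Gaussian measure on the line -/
abbrev gam : Measure ℝ := gaussianReal 0 1
/-- standard Gaussian measure on the plane -/
abbrev gam2 : Measure (ℝ × ℝ) := gam.prod gam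

/-- The Borell functional. -/
def J (ρ s x y : ℝ) : ℝ :=
  gam2.real {z : ℝ × ℝ | gaussTail z.1 ≤ x ∧ gaussTail (ρ * z.1 + s * z.2) ≤ y}

lemma charFunDual_gauss_prod (v : NNReal) (L : StrongDual ℝ (ℝ × ℝ)) :
    charFunDual ((gaussianReal 0 v).prod (gaussianReal 0 v)) L
      = Complex.exp (-(v * ((L (1, 0)) ^ 2 + (L (0, 1)) ^ 2) / 2 : ℝ)) := by
  rw [charFunDual_prod, charFunDual_eq_charFun_map_one, charFunDual_eq_charFun_map_one]
  have h1 : ∀ M : StrongDual ℝ ℝ, (gaussianReal 0 v).map M = gaussianReal 0 (Real.toNNReal ((M 1)^2) * v) := by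
    intro M
    rw [gaussianReal_map_continuousLinearMap]
    congr 1
    simp
  rw [h1, h1, charFun_gaussianReal, charFun_gaussianReal, ← Complex.exp_add]
  congr 1
  simp only [NNReal.coe_mul, Real.coe_toNNReal _ (sq_nonneg _)]
  simp
  ring

lemma rot_invariant {ρ s : ℝ} (h : ρ ^ 2 + s ^ 2 = 1) :
    gam2.map (fun z : ℝ × ℝ => (ρ * z.1 + s * z.2, s * z.1 - ρ * z.2)) = gam2 := by
  let R : (ℝ × ℝ) →L[ℝ] (ℝ × ℝ) :=
    (ρ • ContinuousLinearMap.fst ℝ ℝ ℝ + s • ContinuousLinearMap.snd ℝ ℝ ℝ).prod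
      (s • ContinuousLinearMap.fst ℝ ℝ ℝ - ρ • ContinuousLinearMap.snd ℝ ℝ ℝ)
  have hR : (fun z : ℝ × ℝ => (ρ * z.1 + s * z.2, s * z.1 - ρ * z.2)) = R := by
    funext z; simp [R]
  rw [hR]
  have : IsProbabilityMeasure (gam2.map R) := Measure.isProbabilityMeasure_map (by fun_prop)
  apply Measure.ext_of_charFunDual
  funext L
  rw [charFunDual_map, charFunDual_gauss_prod, charFunDual_gauss_prod]
  congr 3
  have e1 : (L ∘L R) (1, 0) = ρ * L (1,0) + s * L (0,1) := by
    have : R (1, 0) = ρ • ((1:ℝ), (0:ℝ)) + s • ((0:ℝ), (1:ℝ)) := by simp [R]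
    rw [ContinuousLinearMap.comp_apply, this, map_add, map_smul, map_smul]; simp
  have e2 : (L ∘L R) (0, 1) = s * L (1,0) - ρ * L (0,1) := by
    have : R (0, 1) = s • ((1:ℝ), (0:ℝ)) - ρ • ((0:ℝ), (1:ℝ)) := by simp [R]
    rw [ContinuousLinearMap.comp_apply, this, map_sub, map_smul, map_smul]; simp
  rw [e1, e2]
  congr 2
  linear_combination ((L (1, 0)) ^ 2 + (L (0, 1)) ^ 2) * h

lemma rot_mp {ρ s : ℝ} (h : ρ ^ 2 + s ^ 2 = 1) :
    MeasurePreserving (fun z : ℝ × ℝ => (ρ * z.1 + s * z.2, s * z.1 - ρ * z.2)) gam2 gam2 :=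
  ⟨by fun_prop, rot_invariant h⟩

lemma fst_mp : MeasurePreserving (Prod.fst : ℝ × ℝ → ℝ) gam2 gam := measurePreserving_fst

lemma lin_mp {ρ s : ℝ} (h : ρ ^ 2 + s ^ 2 = 1) :
    MeasurePreserving (fun z : ℝ × ℝ => ρ * z.1 + s * z.2) gam2 gam :=
  fst_mp.comp (rot_mp h)

lemma U_measurable : Measurable gaussTail := U_continuous.measurable

lemma J_set_meas (ρ s x y : ℝ) :
    MeasurableSet {z : ℝ × ℝ | gaussTail z.1 ≤ x ∧ gaussTail (ρ * z.1 + s * z.2) ≤ y} := by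
  have := U_measurable
  have h1 : MeasurableSet {z : ℝ × ℝ | gaussTail z.1 ≤ x} :=
    measurableSet_le (by fun_prop) (by fun_prop)
  have h2 : MeasurableSet {z : ℝ × ℝ | gaussTail (ρ * z.1 + s * z.2) ≤ y} :=
    measurableSet_le (by fun_prop) (by fun_prop)
  exact h1.inter h2

lemma J_symm {ρ s : ℝ} (h : ρ ^ 2 + s ^ 2 = 1) (x y : ℝ) : J ρ s x y = J ρ s y x := by
  rw [J, J, ← (rot_mp h).measureReal_preimage (J_set_meas ρ s x y).nullMeasurableSet]
  congr 1
  ext z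
  simp only [mem_preimage, mem_ofPred_eq]
  have : ρ * (ρ * z.1 + s * z.2) + s * (s * z.1 - ρ * z.2) = z.1 := by
    linear_combination z.1 * h
  rw [this, and_comm]

lemma J_mono (ρ s : ℝ) {x x' y y' : ℝ} (h1 : x ≤ x') (h2 : y ≤ y') : J ρ s x y ≤ J ρ s x' y' :=
  measureReal_mono fun _ hz => ⟨hz.1.trans h1, hz.2.trans h2⟩

lemma J_nonneg (ρ s x y : ℝ) : 0 ≤ J ρ s x y := measureReal_nonneg
lemma J_le_one (ρ s x y : ℝ) : J ρ s x y ≤ 1 := measureReal_le_one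

lemma gam_U_le (x : ℝ) : gam.real {u | gaussTail u ≤ x} = max 0 (min x 1) := by
  rcases le_or_gt x 0 with h | h
  · have : {u | gaussTail u ≤ x} = ∅ := by
      ext u; simp; linarith [U_pos u]
    rw [this]; simp [min_eq_left (h.trans zero_le_one), h]
  · rcases le_or_gt 1 x with h1 | h1
    · have : {u | gaussTail u ≤ x} = univ := by
        ext u; simp; linarith [U_lt_one u]
      rw [this]; simp [h1]
    · obtain ⟨a, rfl⟩ := U_surj h h1
      have : {u | gaussTail u ≤ gaussTail a} = Ici a := by
        ext u; simp [U_strictAnti.le_iff_ge]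
      rw [this, min_eq_left h1.le, max_eq_right h.le]; rfl

lemma clamp_lip {x x' : ℝ} (h : x ≤ x') : max 0 (min x' 1) - max 0 (min x 1) ≤ x' - x := by
  rcases le_total x 1 with h1 | h1 <;> rcases le_total x' 1 with h2 | h2 <;>
  simp only [min_eq_left, min_eq_right, h1, h2] <;>
  rcases le_total 0 x with h3 | h3 <;> rcases le_total 0 x' with h4 | h4 <;>
  simp [h3, h4] <;> linarith

lemma J_lip_left (ρ s : ℝ) {x x' : ℝ} (y : ℝ) (h : x ≤ x') :
    J ρ s x' y ≤ J ρ s x y + (x' - x) := by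
  have hm := U_measurable
  have e1 : ∀ t, gam2.real {z : ℝ × ℝ | gaussTail z.1 ≤ t} = max 0 (min t 1) := by
    intro t
    rw [← gam_U_le, ← fst_mp.measureReal_preimage
      (measurableSet_le (by fun_prop) (by fun_prop)).nullMeasurableSet]
    rfl
  have hsub : {z : ℝ × ℝ | gaussTail z.1 ≤ x' ∧ gaussTail (ρ * z.1 + s * z.2) ≤ y} ⊆
      {z : ℝ × ℝ | gaussTail z.1 ≤ x ∧ gaussTail (ρ * z.1 + s * z.2) ≤ y} ∪
      ({z : ℝ × ℝ | gaussTail z.1 ≤ x'} \ {z : ℝ × ℝ | gaussTail z.1 ≤ x}) := by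
    intro z hz
    by_cases hx : gaussTail z.1 ≤ x
    · exact Or.inl ⟨hx, hz.2⟩
    · exact Or.inr ⟨hz.1, hx⟩
  have h2 := (measureReal_mono hsub).trans (measureReal_union_le (μ := gam2) _ _)
  have hsub2 : {z : ℝ × ℝ | gaussTail z.1 ≤ x} ⊆ {z : ℝ × ℝ | gaussTail z.1 ≤ x'} :=
    fun z hz => le_trans hz h
  rw [measureReal_sdiff hsub2 (measurableSet_le (by fun_prop) (by fun_prop)), e1, e1] at h2
  have := clamp_lip h
  unfold J
  linarith

lemma J_lip {ρ s : ℝ} (hr : ρ ^ 2 + s ^ 2 = 1) (x y x' y' : ℝ) :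
    |J ρ s x' y' - J ρ s x y| ≤ |x' - x| + |y' - y| := by
  have key : ∀ x x' y : ℝ, |J ρ s x' y - J ρ s x y| ≤ |x' - x| := by
    intro x x' y
    rcases le_total x x' with h | h
    · have h1 := J_lip_left ρ s y h
      have h2 := J_mono ρ s h (le_refl y)
      rw [abs_of_nonneg (by linarith), abs_of_nonneg (by linarith)]; linarith
    · have h1 := J_lip_left ρ s y h
      have h2 := J_mono ρ s h (le_refl y)
      rw [abs_of_nonpos (by linarith), abs_of_nonpos (by linarith)]; linarith
  calc |J ρ s x' y' - J ρ s x y| = |(J ρ s x' y' - J ρ s x y') + (J ρ s y' x - J ρ s y x)| := by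
        rw [J_symm hr x y', J_symm hr x y]; congr 1; ring
    _ ≤ _ := (abs_add_le _ _).trans (add_le_add (key _ _ _) (key _ _ _))

lemma J_continuous {ρ s : ℝ} (hr : ρ ^ 2 + s ^ 2 = 1) :
    Continuous (fun p : ℝ × ℝ => J ρ s p.1 p.2) := by
  have : LipschitzWith 2 (fun p : ℝ × ℝ => J ρ s p.1 p.2) := by
    apply LipschitzWith.of_dist_le_mul
    intro p q
    rw [Real.dist_eq]
    have h := J_lip hr q.1 q.2 p.1 p.2
    have h1 : |p.1 - q.1| ≤ dist p q := by rw [Prod.dist_eq]; exact le_max_left _ _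
    have h2 : |p.2 - q.2| ≤ dist p q := by rw [Prod.dist_eq]; exact le_max_right _ _
    simp only [NNReal.coe_ofNat]
    linarith
  exact this.continuous

lemma J_zero_left (ρ s y : ℝ) : J ρ s 0 y = 0 := by
  have : {z : ℝ × ℝ | gaussTail z.1 ≤ 0 ∧ gaussTail (ρ * z.1 + s * z.2) ≤ y} = ∅ := by
    ext z; simp; intro h; linarith [U_pos z.1]
  rw [J, this]; simp

lemma J_zero_right (ρ s x : ℝ) : J ρ s x 0 = 0 := by
  have : {z : ℝ × ℝ | gaussTail z.1 ≤ x ∧ gaussTail (ρ * z.1 + s * z.2) ≤ 0} = ∅ := by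
    ext z; simp; intro h; linarith [U_pos (ρ * z.1 + s * z.2)]
  rw [J, this]; simp

lemma J_one_one (ρ s : ℝ) : J ρ s 1 1 = 1 := by
  have : {z : ℝ × ℝ | gaussTail z.1 ≤ 1 ∧ gaussTail (ρ * z.1 + s * z.2) ≤ 1} = univ := by
    ext z; simp [(U_lt_one _).le]
  rw [J, this]; simp

lemma J_U (ρ s a b : ℝ) :
    J ρ s (gaussTail a) (gaussTail b) = gam2.real {z : ℝ × ℝ | a ≤ z.1 ∧ b ≤ ρ * z.1 + s * z.2} := by
  simp only [J, U_strictAnti.le_iff_ge]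

lemma wedge_formula (a : ℝ) (c : ℝ → ℝ) (hc : Continuous c) :
    gam2.real {z : ℝ × ℝ | a ≤ z.1 ∧ c z.1 ≤ z.2} = ∫ u in Ioi a, phi u * gaussTail (c u) := by
  have hm : MeasurableSet {z : ℝ × ℝ | a ≤ z.1 ∧ c z.1 ≤ z.2} := by
    have := hc.measurable
    have h1 : MeasurableSet {z : ℝ × ℝ | a ≤ z.1} :=
      measurableSet_le (by fun_prop) (by fun_prop)
    have h2 : MeasurableSet {z : ℝ × ℝ | c z.1 ≤ z.2} :=
      measurableSet_le (by fun_prop) (by fun_prop)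
    exact h1.inter h2
  have h1 : gam2.real {z : ℝ × ℝ | a ≤ z.1 ∧ c z.1 ≤ z.2}
      = ∫ u, (gam.real (Prod.mk u ⁻¹' {z : ℝ × ℝ | a ≤ z.1 ∧ c z.1 ≤ z.2})) ∂gam := by
    rw [measureReal_def, Measure.prod_apply hm, ← integral_toReal]
    · rfl
    · exact (measurable_measure_prodMk_left hm).aemeasurable
    · exact Eventually.of_forall fun _ => measure_lt_top _ _
  rw [h1, integral_gaussianReal_eq_integral_smul (by norm_num), ← integral_Ici_eq_integral_Ioi,
    ← integral_indicator measurableSet_Ici]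
  congr 1
  funext u
  by_cases hu : a ≤ u
  · rw [indicator_of_mem (mem_Ici.2 hu), smul_eq_mul]
    congr 1
    rw [gaussTail, measureReal_def]
    congr 2
    ext v; simp [hu]
  · rw [indicator_of_notMem (by simpa using hu)]
    have : Prod.mk u ⁻¹' {z : ℝ × ℝ | a ≤ z.1 ∧ c z.1 ≤ z.2} = ∅ := by
      ext v; simp; intro h; exact absurd h hu
    rw [this]; simp

lemma phiU_integrable (c : ℝ → ℝ) (hc : Continuous c) :
    Integrable (fun u => phi u * gaussTail (c u)) := by
  apply phi_integrable.mono' (by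
    have h1 := phi_continuous
    have h2 := U_continuous
    exact (by fun_prop : Continuous (fun u => phi u * gaussTail (c u))).aestronglyMeasurable)
  refine Eventually.of_forall fun u => ?_
  have h1 := phi_pos u
  have h2 := U_pos (c u)
  have h3 := U_lt_one (c u)
  rw [Real.norm_eq_abs, abs_of_pos (by positivity)]
  nlinarith

lemma J_integral {ρ s : ℝ} (hs : 0 < s) (a b : ℝ) :
    J ρ s (gaussTail a) (gaussTail b) = ∫ u in Ioi a, phi u * gaussTail ((b - ρ * u) / s) := by
  rw [J_U, ← wedge_formula a (fun u => (b - ρ * u) / s) (by fun_prop)]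
  congr 1
  ext z
  simp only [mem_ofPred_eq]
  rw [div_le_iff₀ hs, sub_le_iff_le_add, mul_comm z.2 s, add_comm (s * z.2)]

lemma J_hasDerivAt {ρ s : ℝ} (hs : 0 < s) (b u : ℝ) :
    HasDerivAt (fun a => J ρ s (gaussTail a) (gaussTail b))
      (-(phi u * gaussTail ((b - ρ * u) / s))) u := by
  have hIntg := phiU_integrable (fun u => (b - ρ * u) / s) (by fun_prop)
  have hcont : Continuous (fun u => phi u * gaussTail ((b - ρ * u) / s)) := by
    have h1 := phi_continuous
    have h2 := U_continuous
    fun_prop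
  have h : (fun a => J ρ s (gaussTail a) (gaussTail b)) = fun a => J ρ s (gaussTail 0) (gaussTail b)
      - ∫ u in (0:ℝ)..a, phi u * gaussTail ((b - ρ * u) / s) := by
    funext a
    rw [J_integral hs, J_integral hs,
      ← intervalIntegral.integral_Ioi_sub_Ioi' hIntg.integrableOn hIntg.integrableOn]
    ring
  rw [h]
  have := intervalIntegral.integral_hasDerivAt_right (a := 0) (b := u)
    (hcont.intervalIntegrable _ _) (hcont.stronglyMeasurableAtFilter _ _)
    hcont.continuousAt
  simpa using this.const_sub (J ρ s (gaussTail 0) (gaussTail b))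

end LSH

namespace LSH
open Set Filter Topology

lemma phi_mono_abs {a R : ℝ} (h : |a| ≤ R) : phi R ≤ phi a := by
  rw [phi_eq, phi_eq]
  have : a ^ 2 ≤ R ^ 2 := by rw [← sq_abs a]; gcongr
  gcongr

lemma U_expand {a a0 R : ℝ} (ha : |a| ≤ R) (ha0 : |a0| ≤ R) :
    phi R * |a - a0| ≤ |gaussTail a - gaussTail a0| := by
  have key : ∀ a a0 : ℝ, |a| ≤ R → |a0| ≤ R → a0 < a →
      phi R * |a - a0| ≤ |gaussTail a - gaussTail a0| := by
    intro a a0 ha ha0 h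
    obtain ⟨c, hc, hc'⟩ := exists_hasDerivAt_eq_slope gaussTail (fun x => -phi x) h
      U_continuous.continuousOn (fun x _ => U_hasDerivAt x)
    have h1 : 0 < a - a0 := by linarith
    rw [eq_div_iff h1.ne'] at hc'
    rw [← hc', abs_mul, abs_neg, abs_of_pos (phi_pos c)]
    gcongr
    apply phi_mono_abs
    rw [abs_le] at *
    constructor <;> linarith [hc.1, hc.2, ha.1, ha.2, ha0.1, ha0.2]
  rcases lt_trichotomy a0 a with h | h | h
  · exact key _ _ ha ha0 h
  · simp [h]
  · rw [abs_sub_comm, abs_sub_comm (gaussTail a)]; exact key _ _ ha0 ha h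

lemma Q_first {a a0 R : ℝ} (ha : |a| ≤ R) (ha0 : |a0| ≤ R) :
    |a - a0| ≤ |gaussTail a - gaussTail a0| / phi R := by
  rw [le_div_iff₀ (phi_pos R), mul_comm]; exact U_expand ha ha0

lemma Q_second {a a0 R : ℝ} (ha : |a| ≤ R) (ha0 : |a0| ≤ R) :
    |(a - a0) + (gaussTail a - gaussTail a0) / phi a0|
      ≤ (gaussTail a - gaussTail a0) ^ 2 / phi R ^ 3 := by
  have h1 := U_taylor a0 a
  have h2 := Q_first ha ha0
  have h3 := phi_mono_abs ha0
  have hR := phi_pos R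
  have h0 := phi_pos a0
  have e : (a - a0) + (gaussTail a - gaussTail a0) / phi a0
      = (gaussTail a - gaussTail a0 + phi a0 * (a - a0)) / phi a0 := by
    field_simp; ring
  rw [e, abs_div, abs_of_pos h0]
  calc _ ≤ (a - a0) ^ 2 / phi R := by gcongr
    _ ≤ (|gaussTail a - gaussTail a0| / phi R) ^ 2 / phi R := by
        rw [← sq_abs (a - a0)]; gcongr
    _ = _ := by rw [div_pow, sq_abs, div_div]; congr 1

variable {ρ s : ℝ}

set_option maxHeartbeats 1000000 in
lemma G_taylor (h0 : 0 < ρ) (hs : 0 < s) (hr : ρ ^ 2 + s ^ 2 = 1) {a b a0 b0 R : ℝ}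
    (ha : |a| ≤ R) (ha0 : |a0| ≤ R) (hb : |b| ≤ R) (hb0 : |b0| ≤ R) :
    |gaussTail ((b - ρ * a) / s) - gaussTail ((b0 - ρ * a0) / s)
      - (-ρ * phi ((b0 - ρ * a0) / s) / (s * phi a0)) * (gaussTail a - gaussTail a0)
      - (phi ((b0 - ρ * a0) / s) / (s * phi b0)) * (gaussTail b - gaussTail b0)|
    ≤ (1 / (phi R * s) ^ 2 + 1 / (s * phi R ^ 3))
      * (|gaussTail a - gaussTail a0| + |gaussTail b - gaussTail b0|) ^ 2 := by
  set z := (b - ρ * a) / s with hz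
  set z0 := (b0 - ρ * a0) / s with hz0
  set X := gaussTail a - gaussTail a0 with hX
  set Y := gaussTail b - gaussTail b0 with hY
  have hR := phi_pos R
  have hp0 := phi_pos z0
  have hp1 := phi_le_one z0
  have ha0' := phi_pos a0
  have hb0' := phi_pos b0
  have hρ1 : ρ ≤ 1 := by nlinarith
  have h1 := U_taylor z0 z
  have h2 := Q_first ha ha0
  have h3 := Q_first hb hb0
  have h4 := Q_second ha ha0
  have h5 := Q_second hb hb0
  rw [← hX] at h2 h4
  rw [← hY] at h3 h5
  have hzz : z - z0 = ((b - b0) - ρ * (a - a0)) / s := by rw [hz, hz0]; ring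
  have hzabs : |z - z0| ≤ (|X| + |Y|) / (phi R * s) := by
    rw [hzz, abs_div, abs_of_pos hs, ← div_div]
    gcongr
    calc |(b - b0) - ρ * (a - a0)| ≤ |b - b0| + |ρ * (a - a0)| := abs_sub _ _
      _ ≤ |b - b0| + |a - a0| := by
          rw [abs_mul, abs_of_pos h0]; nlinarith [abs_nonneg (a - a0)]
      _ ≤ |Y| / phi R + |X| / phi R := by gcongr
      _ = _ := by ring
  have hzsq : (z - z0) ^ 2 ≤ 1 / (phi R * s) ^ 2 * (|X| + |Y|) ^ 2 := by
    rw [← sq_abs]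
    calc _ ≤ ((|X| + |Y|) / (phi R * s)) ^ 2 := by gcongr
      _ = _ := by rw [div_pow]; ring
  have e : gaussTail z - gaussTail z0 - (-ρ * phi z0 / (s * phi a0)) * X - (phi z0 / (s * phi b0)) * Y
      = (gaussTail z - gaussTail z0 + phi z0 * (z - z0))
        + phi z0 / s * (ρ * ((a - a0) + X / phi a0) - ((b - b0) + Y / phi b0)) := by
    rw [hzz]; field_simp; ring
  rw [e]
  have hlin : |phi z0 / s * (ρ * ((a - a0) + X / phi a0) - ((b - b0) + Y / phi b0))|
      ≤ 1 / (s * phi R ^ 3) * (|X| + |Y|) ^ 2 := by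
    rw [abs_mul, abs_of_pos (by positivity : 0 < phi z0 / s)]
    calc _ ≤ 1 / s * (|ρ * ((a - a0) + X / phi a0)| + |(b - b0) + Y / phi b0|) := by
          gcongr; exact abs_sub _ _
      _ ≤ 1 / s * (X ^ 2 / phi R ^ 3 + Y ^ 2 / phi R ^ 3) := by
          gcongr
          rw [abs_mul, abs_of_pos h0]
          nlinarith [abs_nonneg ((a - a0) + X / phi a0)]
      _ = 1 / (s * phi R ^ 3) * (X ^ 2 + Y ^ 2) := by field_simp
      _ ≤ _ := by
          have h6 := mul_nonneg (abs_nonneg X) (abs_nonneg Y)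
          have h7 : X ^ 2 + Y ^ 2 ≤ (|X| + |Y|) ^ 2 := by
            rw [add_sq, sq_abs, sq_abs]; linarith
          exact mul_le_mul_of_nonneg_left h7 (by positivity)
  calc _ ≤ _ := abs_add_le _ _
    _ ≤ 1 / (phi R * s) ^ 2 * (|X| + |Y|) ^ 2 + 1 / (s * phi R ^ 3) * (|X| + |Y|) ^ 2 :=
        add_le_add (h1.trans hzsq) hlin
    _ = _ := by ring

lemma H_taylor (h0 : 0 < ρ) (hs : 0 < s) (hr : ρ ^ 2 + s ^ 2 = 1) {a b a0 b0 R : ℝ}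
    (ha : |a| ≤ R) (ha0 : |a0| ≤ R) (hb : |b| ≤ R) (hb0 : |b0| ≤ R) :
    |J ρ s (gaussTail a) (gaussTail b) - J ρ s (gaussTail a0) (gaussTail b)
      - (gaussTail ((b0 - ρ * a0) / s) * (gaussTail a - gaussTail a0)
        + (-ρ * phi ((b0 - ρ * a0) / s) / (s * phi a0)) * (gaussTail a - gaussTail a0) ^ 2 / 2
        + (phi ((b0 - ρ * a0) / s) / (s * phi b0)) * (gaussTail a - gaussTail a0)
            * (gaussTail b - gaussTail b0))|
    ≤ (1 / (phi R * s) ^ 2 + 1 / (s * phi R ^ 3)) / phi R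
      * (|gaussTail a - gaussTail a0| + |gaussTail b - gaussTail b0|) ^ 3 := by
  set p := gaussTail ((b0 - ρ * a0) / s) with hp
  set A := (-ρ * phi ((b0 - ρ * a0) / s) / (s * phi a0)) with hA
  set B := (phi ((b0 - ρ * a0) / s) / (s * phi b0)) with hB
  set C := (1 / (phi R * s) ^ 2 + 1 / (s * phi R ^ 3)) with hC
  set Y := gaussTail b - gaussTail b0 with hY
  set X := gaussTail a - gaussTail a0 with hX
  have hR := phi_pos R
  have hC0 : 0 < C := by positivity
  have key := Convex.norm_image_sub_le_of_norm_hasDerivWithin_le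
    (f := fun u => J ρ s (gaussTail u) (gaussTail b)
      - (p * (gaussTail u - gaussTail a0) + A * (gaussTail u - gaussTail a0) ^ 2 / 2
        + B * (gaussTail u - gaussTail a0) * Y))
    (f' := fun u => -(phi u * gaussTail ((b - ρ * u) / s))
      - (p * (-phi u) + A * (2 * (gaussTail u - gaussTail a0) * (-phi u)) / 2 + B * (-phi u) * Y))
    (s := uIcc a0 a) (C := C * (|X| + |Y|) ^ 2) (x := a0) (y := a)
    (fun u _ => by
      have hu := (U_hasDerivAt u).sub_const (gaussTail a0)
      have := (J_hasDerivAt (ρ := ρ) hs b u).sub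
        (((hu.const_mul p).add (((hu.pow 2).const_mul A).div_const 2)).add
          ((hu.const_mul B).mul_const Y))
      refine HasDerivAt.hasDerivWithinAt (this.congr_deriv ?_)
      simp)
    (fun u hu => by
      have huR : |u| ≤ R := by
        have h1 : |u - a0| ≤ |a - a0| := abs_sub_left_of_mem_uIcc hu
        have h2 : uIcc a0 a ⊆ Icc (-R) R := by
          exact uIcc_subset_Icc (abs_le.1 ha0) (abs_le.1 ha)
        exact abs_le.2 (h2 hu)
      have hG := G_taylor h0 hs hr huR ha0 hb hb0
      rw [← hp, ← hA, ← hB, ← hC, ← hY] at hG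
      have hUX : |gaussTail u - gaussTail a0| ≤ |X| := by
        have : gaussTail u ∈ uIcc (gaussTail a0) (gaussTail a) := by
          rcases le_total a0 a with h | h
          · rw [uIcc_of_le h] at hu
            rw [uIcc_of_ge (U_strictAnti.antitone h)]
            exact ⟨U_strictAnti.antitone hu.2, U_strictAnti.antitone hu.1⟩
          · rw [uIcc_of_ge h] at hu
            rw [uIcc_of_le (U_strictAnti.antitone h)]
            exact ⟨U_strictAnti.antitone hu.2, U_strictAnti.antitone hu.1⟩
        exact abs_sub_left_of_mem_uIcc this
      rw [Real.norm_eq_abs]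
      have e : -(phi u * gaussTail ((b - ρ * u) / s))
      - (p * (-phi u) + A * (2 * (gaussTail u - gaussTail a0) * (-phi u)) / 2 + B * (-phi u) * Y)
        = -(phi u) * (gaussTail ((b - ρ * u) / s) - p - A * (gaussTail u - gaussTail a0) - B * Y) := by
        ring
      rw [e, abs_mul, abs_neg, abs_of_pos (phi_pos u)]
      calc _ ≤ 1 * (C * (|gaussTail u - gaussTail a0| + |Y|) ^ 2) :=
            mul_le_mul (phi_le_one u) hG (abs_nonneg _) zero_le_one
        _ ≤ _ := by rw [one_mul]; gcongr)
    (convex_uIcc a0 a) left_mem_uIcc right_mem_uIcc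
  rw [Real.norm_eq_abs, Real.norm_eq_abs] at key
  have h2 := Q_first ha ha0
  rw [← hX] at h2 
  calc _ = |J ρ s (gaussTail a) (gaussTail b) - (p * X + A * X ^ 2 / 2 + B * X * Y)
      - (J ρ s (gaussTail a0) (gaussTail b) - (p * (gaussTail a0 - gaussTail a0)
        + A * (gaussTail a0 - gaussTail a0) ^ 2 / 2 + B * (gaussTail a0 - gaussTail a0) * Y))| := by
        congr 1; ring
    _ ≤ C * (|X| + |Y|) ^ 2 * |a - a0| := key
    _ ≤ C * (|X| + |Y|) ^ 2 * ((|X| + |Y|) / phi R) := by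
        gcongr
        refine h2.trans ?_
        gcongr
        linarith [abs_nonneg Y]
    _ = _ := by ring

lemma density_symm (hs : 0 < s) (hr : ρ ^ 2 + s ^ 2 = 1) (a b : ℝ) :
    phi ((a - ρ * b) / s) * phi b = phi ((b - ρ * a) / s) * phi a := by
  simp only [phi_eq]
  have key : ∀ a b : ℝ, (√(2 * π))⁻¹ * exp (-((a - ρ * b) / s) ^ 2 / 2) * ((√(2 * π))⁻¹ * exp (-b ^ 2 / 2))
     = (√(2 * π))⁻¹ ^ 2 * exp (-(a^2 + b^2 - 2 * ρ * a * b) / (2 * s^2)) := by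
    intro a b
    rw [mul_mul_mul_comm, ← Real.exp_add, ← sq]
    congr 2
    field_simp
    linear_combination (-b^2) * hr
  rw [key, key]
  congr 3; ring

set_option maxHeartbeats 1000000 in
lemma J_taylor (h0 : 0 < ρ) (hs : 0 < s) (hr : ρ ^ 2 + s ^ 2 = 1) (δ : ℝ) (hδ : 0 < δ) (hδ' : δ < 1 / 2) :
    ∃ C : ℝ, 0 ≤ C ∧ ∀ x0 ∈ Icc δ (1 - δ), ∀ y0 ∈ Icc δ (1 - δ), ∃ p q K l n : ℝ,
      0 ≤ K ∧ K ≤ C ∧ 0 ≤ l ∧ l ≤ C ∧ 0 ≤ n ∧ n ≤ C ∧ 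
      ∀ x ∈ Icc δ (1 - δ), ∀ y ∈ Icc δ (1 - δ),
        J ρ s x y ≤ J ρ s x0 y0 + p * (x - x0) + q * (y - y0)
          + K / 2 * (-ρ * l ^ 2 * (x - x0) ^ 2 + 2 * l * n * (x - x0) * (y - y0)
            - ρ * n ^ 2 * (y - y0) ^ 2) + C * (|x - x0| + |y - y0|) ^ 3 := by
  obtain ⟨R, hR⟩ := U_surj hδ (by linarith)
  have hUR : gaussTail (-R) = 1 - δ := by rw [U_neg, hR]
  have hrep : ∀ x ∈ Icc δ (1 - δ), ∃ a, gaussTail a = x ∧ |a| ≤ R := by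
    intro x hx
    obtain ⟨a, ha⟩ := U_surj (y := x) (by linarith [hx.1]) (by linarith [hx.2])
    refine ⟨a, ha, abs_le.2 ⟨?_, ?_⟩⟩
    · rw [← U_strictAnti.le_iff_ge, ha, hUR]; exact hx.2
    · rw [← U_strictAnti.le_iff_ge, ha, hR]; exact hx.1
  have hm := phi_pos R
  set C0 := (1 / (phi R * s) ^ 2 + 1 / (s * phi R ^ 3)) / phi R with hC0
  have hC0p : 0 < C0 := by positivity
  refine ⟨2 * C0 + 1 / s + 1 / phi R, by positivity, ?_⟩
  intro x0 hx0 y0 hy0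
  obtain ⟨a0, rfl, ha0⟩ := hrep x0 hx0
  obtain ⟨b0, rfl, hb0⟩ := hrep y0 hy0
  have hpa := phi_pos a0
  have hpb := phi_pos b0
  have hma := phi_mono_abs ha0
  have hmb := phi_mono_abs hb0
  have hpz := phi_pos ((b0 - ρ * a0) / s)
  have hs' : 0 < 1 / s := by positivity
  have hR' : 0 < 1 / phi R := by positivity
  refine ⟨gaussTail ((b0 - ρ * a0) / s), gaussTail ((a0 - ρ * b0) / s),
    phi ((b0 - ρ * a0) / s) * phi a0 / s, 1 / phi a0, 1 / phi b0, by positivity, ?_, by positivity, ?_,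
    by positivity, ?_, ?_⟩
  · have : phi ((b0 - ρ * a0) / s) * phi a0 / s ≤ 1 * 1 / s := by
      gcongr <;> exact phi_le_one _
    linarith
  · have : 1 / phi a0 ≤ 1 / phi R := by gcongr
    linarith
  · have : 1 / phi b0 ≤ 1 / phi R := by gcongr
    linarith
  intro x hx y hy
  obtain ⟨a, rfl, ha⟩ := hrep x hx
  obtain ⟨b, rfl, hb⟩ := hrep y hy
  have t1 := H_taylor h0 hs hr ha ha0 hb hb0
  have t2 := H_taylor h0 hs hr hb hb0 ha0 ha0
  rw [← hC0] at t1 t2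
  simp only [sub_self, mul_zero, abs_zero, add_zero] at t2
  rw [J_symm hr (gaussTail b), J_symm hr (gaussTail b0)] at t2
  set X := gaussTail a - gaussTail a0
  set Y := gaussTail b - gaussTail b0
  have hsym := density_symm hs hr a0 b0
  have eA : -ρ * phi ((b0 - ρ * a0) / s) / (s * phi a0)
      = - ρ * (phi ((b0 - ρ * a0) / s) * phi a0 / s) * (1 / phi a0) ^ 2 := by field_simp
  have eB : phi ((b0 - ρ * a0) / s) / (s * phi b0)
      = (phi ((b0 - ρ * a0) / s) * phi a0 / s) * (1 / phi a0) * (1 / phi b0) := by field_simp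
  have eA' : -ρ * phi ((a0 - ρ * b0) / s) / (s * phi b0)
      = - ρ * (phi ((b0 - ρ * a0) / s) * phi a0 / s) * (1 / phi b0) ^ 2 := by
    rw [← hsym]; field_simp
  rw [eA, eB] at t1
  rw [eA'] at t2
  have u1 := (abs_le.1 t1).2
  have u2 := (abs_le.1 t2).2
  have h3 : C0 * |Y| ^ 3 ≤ C0 * (|X| + |Y|) ^ 3 := by
    gcongr; linarith [abs_nonneg X]
  have h4 : 0 ≤ (1 / s + 1 / phi R) * (|X| + |Y|) ^ 3 := by positivity
  linarith [u1, u2, h3, h4]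

end LSH

namespace LSH
open Set Filter Topology

/-- Class of nice functions. -/
structure Cls (δ L : ℝ) (f : ℝ → ℝ) : Prop where
  mem : ∀ x, f x ∈ Icc δ (1 - δ)
  lip : ∀ x u, |f (x + u) - f x| ≤ L * |u|
  der : ∃ f' : ℝ → ℝ, Measurable f' ∧ (∀ x, |f' x| ≤ L) ∧
    ∀ x u, |f (x + u) - f x - f' x * u| ≤ L * u ^ 2

/-- Heat semigroup -/
def P (σ : ℝ) (f : ℝ → ℝ) (x : ℝ) : ℝ := ∫ u, f (x + σ * u) ∂gam

lemma Cls.cont {δ L : ℝ} {f : ℝ → ℝ} (h : Cls δ L f) : Continuous f := by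
  have hL : 0 ≤ L := by have := (abs_nonneg _).trans (h.lip 0 1); simpa using this
  have : LipschitzWith ⟨L, hL⟩ f := by
    apply LipschitzWith.of_dist_le_mul
    intro x y
    have := h.lip y (x - y)
    simp only [add_sub_cancel] at this
    simp only [Real.dist_eq]
    exact this
  exact this.continuous

lemma bdd_integrable {α : Type*} [MeasurableSpace α] {μ : Measure α} [IsProbabilityMeasure μ]
    {f : α → ℝ} (hf : AEStronglyMeasurable f μ) (C : ℝ) (h : ∀ x, |f x| ≤ C) : Integrable f μ :=
  Integrable.of_bound hf C (Eventually.of_forall h)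

lemma gam_memLp (p : NNReal) : MemLp (fun u : ℝ => u) p gam := memLp_id_gaussianReal p

lemma gam_memLpN (n : ℕ) : MemLp (fun u : ℝ => u) (n : ENNReal) gam := by
  have := gam_memLp n
  simpa using this

lemma gam_int1 : Integrable (fun u : ℝ => u) gam := (gam_memLp 1).integrable (by norm_num)
lemma gam_int2 : Integrable (fun u : ℝ => u ^ 2) gam := (gam_memLp 2).integrable_sq
lemma gam_mean : ∫ u : ℝ, u ∂gam = 0 := integral_id_gaussianReal
lemma gam_sq : ∫ u : ℝ, u ^ 2 ∂gam = 1 := by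
  have h := variance_id_gaussianReal (μ := 0) (v := 1)
  rw [variance_eq_sub (by exact gam_memLp 2)] at h
  simpa [gam_mean] using h

lemma Cls.int {δ L : ℝ} {f : ℝ → ℝ} (hδ : 0 ≤ δ) (h : Cls δ L f) (x σ : ℝ) :
    Integrable (fun u => f (x + σ * u)) gam := by
  have := h.cont
  refine bdd_integrable (by fun_prop) 1 fun u => ?_
  have := h.mem (x + σ * u)
  rw [abs_le]; constructor <;> linarith [this.1, this.2]

lemma Cls.L_nonneg {δ L : ℝ} {f : ℝ → ℝ} (h : Cls δ L f) : 0 ≤ L := by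
  have := (abs_nonneg _).trans (h.lip 0 1); simpa using this

lemma Cls.P {δ L : ℝ} {f : ℝ → ℝ} (hδ : 0 ≤ δ) (h : Cls δ L f) (σ : ℝ) : Cls δ L (P σ f) := by
  obtain ⟨f', hm, hb, hd⟩ := h.der
  have hi' : ∀ x, Integrable (fun u => f' (x + σ * u)) gam := fun x =>
    bdd_integrable (hm.comp (by fun_prop)).aestronglyMeasurable L fun u => hb _
  refine ⟨fun x => ⟨?_, ?_⟩, fun x u => ?_, LSH.P σ f', ?_, fun x => ?_, fun x u => ?_⟩
  · have := integral_mono (μ := gam) (integrable_const δ) (h.int hδ x σ) (fun u => (h.mem _).1)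
    simpa [LSH.P] using this
  · have := integral_mono (μ := gam) (h.int hδ x σ) (integrable_const (1 - δ)) (fun u => (h.mem _).2)
    simpa [LSH.P] using this
  · rw [LSH.P, LSH.P, ← integral_sub (h.int hδ _ σ) (h.int hδ _ σ)]
    have := norm_integral_le_of_norm_le_const (μ := gam) (C := L * |u|)
      (f := fun v => f (x + u + σ * v) - f (x + σ * v)) (Eventually.of_forall fun v => by
        have := h.lip (x + σ * v) u
        rwa [show x + σ * v + u = x + u + σ * v by ring] at this)
    simpa using this
  · have : StronglyMeasurable (fun p : ℝ × ℝ => f' (p.1 + σ * p.2)) :=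
      (hm.comp (by fun_prop)).stronglyMeasurable
    exact this.integral_prod_right.measurable
  · have := norm_integral_le_of_norm_le_const (μ := gam) (C := L)
      (f := fun v => f' (x + σ * v)) (Eventually.of_forall fun v => hb _)
    simpa [LSH.P] using this
  · rw [LSH.P, LSH.P, LSH.P, ← integral_mul_const,
      ← integral_sub (h.int hδ _ σ) (h.int hδ _ σ), ← integral_sub
        (by exact (h.int hδ _ σ).sub (h.int hδ _ σ)) ((hi' x).mul_const u)]
    have := norm_integral_le_of_norm_le_const (μ := gam) (C := L * u ^ 2)
      (f := fun v => f (x + u + σ * v) - f (x + σ * v) - f' (x + σ * v) * u)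
      (Eventually.of_forall fun v => by
        have := hd (x + σ * v) u
        rwa [show x + σ * v + u = x + u + σ * v by ring] at this)
    simpa using this

lemma P_close {δ L : ℝ} {f : ℝ → ℝ} (hδ : 0 ≤ δ) (h : Cls δ L f) (σ x : ℝ) :
    |P σ f x - f x| ≤ L * σ ^ 2 := by
  obtain ⟨f', hm, hb, hd⟩ := h.der
  have e : P σ f x - f x = ∫ u, (f (x + σ * u) - f x - f' x * (σ * u)) ∂gam := by
    rw [integral_sub (by exact (h.int hδ _ σ).sub (integrable_const _))
      ((gam_int1.const_mul σ).const_mul _), integral_sub (h.int hδ _ σ) (integrable_const _),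
      integral_const_mul, integral_const_mul, gam_mean, P]
    simp
  rw [e]
  calc _ ≤ ∫ u, |f (x + σ * u) - f x - f' x * (σ * u)| ∂gam := abs_integral_le_integral_abs
    _ ≤ ∫ u, (L * σ ^ 2) * u ^ 2 ∂gam := by
      apply integral_mono
      · exact (((h.int hδ _ σ).sub (integrable_const _)).sub
          ((gam_int1.const_mul σ).const_mul _)).abs
      · exact gam_int2.const_mul _
      · intro u
        have := hd x (σ * u)
        simp only
        calc _ ≤ _ := this
          _ = _ := by ring
    _ = L * σ ^ 2 := by rw [integral_const_mul, gam_sq, mul_one]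

/-- the algebraic inequality -/
lemma form_bound {ρ C K l n u v α β A B : ℝ} (hρ : 0 ≤ ρ) (hρ1 : ρ ≤ 1) (hK : 0 ≤ K) (hKC : K ≤ C)
    (hl : 0 ≤ l) (hlC : l ≤ C) (hn : 0 ≤ n) (hnC : n ≤ C)
    (hu : |u| ≤ A) (hv : |v| ≤ A) (hα : |α| ≤ A) (hβ : |β| ≤ A)
    (huα : |u - α| ≤ B) (hvβ : |v - β| ≤ B) :
    K / 2 * (-ρ * l ^ 2 * u ^ 2 + 2 * l * n * u * v - ρ * n ^ 2 * v ^ 2) + C * (|u| + |v|) ^ 3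
      ≤ K / 2 * (-ρ * l ^ 2 * α ^ 2 + 2 * l * n * α * β - ρ * n ^ 2 * β ^ 2)
        + 4 * C ^ 3 * A * B + 8 * C * A ^ 3 := by
  have hA : 0 ≤ A := (abs_nonneg _).trans hu
  have hB : 0 ≤ B := (abs_nonneg _).trans huα
  have hC : 0 ≤ C := hK.trans hKC
  have key : ∀ a b c d : ℝ, |a| ≤ A → |d| ≤ A → |a - c| ≤ B → |b - d| ≤ B → |b| ≤ A → |c| ≤ A →
      |a * b - c * d| ≤ 2 * A * B := by
    intro a b c d ha hd hac hbd hb hc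
    have : a * b - c * d = (a - c) * b + c * (b - d) := by ring
    rw [this]
    calc _ ≤ |a - c| * |b| + |c| * |b - d| := by
          rw [← abs_mul, ← abs_mul]; exact abs_add_le _ _
      _ ≤ B * A + A * B := by gcongr
      _ = _ := by ring
  have k1 := key u u α α hu hα huα huα hu hα
  have k2 := key v v β β hv hβ hvβ hvβ hv hβ
  have k3 := key u v α β hu hβ huα hvβ hv hα
  have b1 : ρ * l ^ 2 ≤ C ^ 2 := by
    calc ρ * l ^ 2 ≤ 1 * C ^ 2 := by gcongr
      _ = _ := by ring
  have b2 : ρ * n ^ 2 ≤ C ^ 2 := by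
    calc ρ * n ^ 2 ≤ 1 * C ^ 2 := by gcongr
      _ = _ := by ring
  have b3 : l * n ≤ C ^ 2 := by
    calc l * n ≤ C * C := by gcongr
      _ = _ := by ring
  have t1 : ρ * l ^ 2 * (α * α - u * u) ≤ C ^ 2 * (2 * A * B) := by
    apply mul_le_mul b1 _ _ (by positivity) |>.trans' 
    · exact mul_le_mul_of_nonneg_left (le_abs_self _) (by positivity)
    · rw [abs_sub_comm]; exact k1
    · positivity
  have t2 : ρ * n ^ 2 * (β * β - v * v) ≤ C ^ 2 * (2 * A * B) := by
    apply mul_le_mul b2 _ _ (by positivity) |>.trans' 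
    · exact mul_le_mul_of_nonneg_left (le_abs_self _) (by positivity)
    · rw [abs_sub_comm]; exact k2
    · positivity
  have t3 : l * n * (u * v - α * β) ≤ C ^ 2 * (2 * A * B) := by
    apply mul_le_mul b3 _ _ (by positivity) |>.trans' 
    · exact mul_le_mul_of_nonneg_left (le_abs_self _) (by positivity)
    · exact k3
    · positivity
  have t4 : K / 2 * ((-ρ * l ^ 2 * u ^ 2 + 2 * l * n * u * v - ρ * n ^ 2 * v ^ 2)
      - (-ρ * l ^ 2 * α ^ 2 + 2 * l * n * α * β - ρ * n ^ 2 * β ^ 2)) ≤ C / 2 * (8 * C ^ 2 * A * B) := by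
    calc _ ≤ K / 2 * (8 * C ^ 2 * A * B) := by
          apply mul_le_mul_of_nonneg_left _ (by positivity)
          linarith
      _ ≤ _ := by gcongr
  have t5 : C * (|u| + |v|) ^ 3 ≤ C * (A + A) ^ 3 := by gcongr
  linarith

lemma gam_int3 : Integrable (fun u : ℝ => |u| ^ 3) gam := by
  have := (gam_memLpN 3).integrable_norm_pow'
  simpa only [Real.norm_eq_abs] using this

lemma cube_le {a b : ℝ} (ha : 0 ≤ a) (hb : 0 ≤ b) :
    (1 + a + b) ^ 3 ≤ 9 * (1 + a ^ 3 + b ^ 3) := by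
  have key : ∀ x y : ℝ, 0 ≤ x → 0 ≤ y → (x + y) * (x - y) ^ 2 ≥ 0 := fun x y hx hy => by positivity
  have k1 := key 1 a zero_le_one ha
  have k2 := key 1 b zero_le_one hb
  have k3 := key a b ha hb
  have k4 : 0 ≤ (1 + a + b) * ((1 - a) ^ 2 + (1 - b) ^ 2 + (a - b) ^ 2) := by positivity
  nlinarith

lemma N_int {ρ s : ℝ} (hr : ρ ^ 2 + s ^ 2 = 1) :
    Integrable (fun z : ℝ × ℝ => (1 + |z.1| + |ρ * z.1 + s * z.2|) ^ 3) gam2 := by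
  have h1 : Integrable (fun z : ℝ × ℝ => |z.1| ^ 3) gam2 := fst_mp.integrable_comp_of_integrable gam_int3
  have h2 : Integrable (fun z : ℝ × ℝ => |ρ * z.1 + s * z.2| ^ 3) gam2 :=
    (lin_mp hr).integrable_comp_of_integrable gam_int3
  have h3 : Integrable (fun z : ℝ × ℝ => 9 * (1 + |z.1| ^ 3 + |ρ * z.1 + s * z.2| ^ 3)) gam2 :=
    (((integrable_const 1).add h1).add h2).const_mul 9
  refine h3.mono' ?_ (Eventually.of_forall fun z => ?_)
  · exact Continuous.aestronglyMeasurable (by fun_prop)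
  · rw [Real.norm_eq_abs, abs_of_nonneg (by positivity)]
    exact cube_le (abs_nonneg _) (abs_nonneg _)

lemma cross_int {ρ s : ℝ} : Integrable (fun z : ℝ × ℝ => z.1 * (ρ * z.1 + s * z.2)) gam2 := by
  have h1 : Integrable (fun z : ℝ × ℝ => z.1 ^ 2) gam2 := fst_mp.integrable_comp_of_integrable gam_int2
  have h2 : Integrable (fun z : ℝ × ℝ => z.1 * z.2) gam2 := gam_int1.mul_prod gam_int1
  refine ((h1.const_mul ρ).add (h2.const_mul s)).congr (Eventually.of_forall fun z => ?_)
  simp only [Pi.add_apply]; ring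

lemma cross_val {ρ s : ℝ} : ∫ z : ℝ × ℝ, z.1 * (ρ * z.1 + s * z.2) ∂gam2 = ρ := by
  have h1 : Integrable (fun z : ℝ × ℝ => z.1 ^ 2) gam2 := fst_mp.integrable_comp_of_integrable gam_int2
  have h2 : Integrable (fun z : ℝ × ℝ => z.1 * z.2) gam2 := gam_int1.mul_prod gam_int1
  have : ∀ z : ℝ × ℝ, z.1 * (ρ * z.1 + s * z.2) = ρ * z.1 ^ 2 + s * (z.1 * z.2) := fun z => by ring
  simp_rw [this]
  rw [integral_add (h1.const_mul _) (h2.const_mul _), integral_const_mul, integral_const_mul,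
    integral_prod_mul (fun x : ℝ => x) (fun x : ℝ => x), gam_mean]
  have : ∫ z : ℝ × ℝ, z.1 ^ 2 ∂gam2 = 1 := by
    rw [← gam_sq]
    exact integral_fun_fst (fun u : ℝ => u^2) |>.trans (by simp)
  rw [this]; ring

end LSH

namespace LSH
open Set Filter Topology

lemma int_lin {ρ s : ℝ} (hr : ρ ^ 2 + s ^ 2 = 1) {h : ℝ → ℝ} (hh : AEStronglyMeasurable h gam) :
    ∫ z : ℝ × ℝ, h (ρ * z.1 + s * z.2) ∂gam2 = ∫ u, h u ∂gam := by
  have := (lin_mp hr)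
  rw [← this.map_eq] at hh
  have e := integral_map this.measurable.aemeasurable hh
  rw [this.map_eq] at e
  exact e.symm

lemma int_fst {h : ℝ → ℝ} (hh : AEStronglyMeasurable h gam) :
    ∫ z : ℝ × ℝ, h z.1 ∂gam2 = ∫ u, h u ∂gam := by
  have := int_lin (ρ := 1) (s := 0) (by norm_num) hh
  simpa using this

lemma J_comp_int {ρ s : ℝ} (hr : ρ ^ 2 + s ^ 2 = 1) {α : Type*} [MeasurableSpace α] {μ : Measure α}
    [IsProbabilityMeasure μ] {f g : α → ℝ} (hf : Measurable f) (hg : Measurable g) :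
    Integrable (fun z => J ρ s (f z) (g z)) μ := by
  refine bdd_integrable ?_ 1 fun z => ?_
  · exact ((J_continuous hr).measurable.comp (hf.prodMk hg)).aestronglyMeasurable
  · rw [abs_of_nonneg (J_nonneg _ _ _ _)]; exact J_le_one _ _ _ _

set_option maxHeartbeats 1000000 in
lemma one_step {ρ s δ L : ℝ} (h0 : 0 < ρ) (hs : 0 < s) (hr : ρ ^ 2 + s ^ 2 = 1) (hδ : 0 < δ)
    (hδ2 : δ < 1 / 2) : ∃ D, 0 ≤ D ∧ ∀ σ, 0 ≤ σ → σ ≤ 1 → ∀ f g, Cls δ L f → Cls δ L g → ∀ x y,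
      ∫ z : ℝ × ℝ, J ρ s (f (x + σ * z.1)) (g (y + σ * (ρ * z.1 + s * z.2))) ∂gam2
        ≤ J ρ s (P σ f x) (P σ g y) + D * σ ^ 3 := by
  obtain ⟨C, hC, hT⟩ := J_taylor h0 hs hr δ hδ hδ2
  have hρ1 : ρ ≤ 1 := by nlinarith
  by_cases hL : 0 ≤ L
  swap
  · exact ⟨0, le_rfl, fun σ _ _ f g hf => absurd hf.L_nonneg hL⟩
  set M := ∫ z : ℝ × ℝ, (1 + |z.1| + |ρ * z.1 + s * z.2|) ^ 3 ∂gam2 with hM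
  have hM0 : 0 ≤ M := integral_nonneg fun z => by positivity
  set D := 4 * C ^ 3 * L ^ 2 + 8 * C * L ^ 3 with hD
  have hD0 : 0 ≤ D := by positivity
  refine ⟨D * M, by positivity, fun σ hσ hσ1 f g hf hg x y => ?_⟩
  obtain ⟨p, q, K, l, n, hK, hKC, hl, hlC, hn, hnC, hin⟩ :=
    hT _ ((hf.P hδ.le σ).mem x) _ ((hg.P hδ.le σ).mem y)
  set x0 := P σ f x with hx0
  set y0 := P σ g y with hy0
  obtain ⟨f', hfm, hfb, hfd⟩ := hf.der
  obtain ⟨g', hgm, hgb, hgd⟩ := hg.der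
  set a := f' x with ha
  set b := g' y with hb
  have est : ∀ (f f' : ℝ → ℝ), Cls δ L f → (∀ x, |f' x| ≤ L) → 
      (∀ x u, |f (x + u) - f x - f' x * u| ≤ L * u ^ 2) → ∀ x ξ N : ℝ, 1 + |ξ| ≤ N →
      |f (x + σ * ξ) - P σ f x| ≤ L * σ * N ∧ |f' x * σ * ξ| ≤ L * σ * N ∧
      |(f (x + σ * ξ) - P σ f x) - f' x * σ * ξ| ≤ L * σ ^ 2 * N ^ 2 := by
    intro f f' hf hfb hfd x ξ N hN
    have hp := P_close hδ.le hf σ x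
    have h1 := hf.lip x (σ * ξ)
    have h2 := hfd x (σ * ξ)
    rw [abs_mul, abs_of_nonneg hσ] at h1
    have hσ2 : σ ^ 2 ≤ σ := by nlinarith
    have hξ := abs_nonneg ξ
    have hN2 : 1 + ξ ^ 2 ≤ N ^ 2 := by
      rw [← sq_abs ξ]; nlinarith
    refine ⟨?_, ?_, ?_⟩
    · have : |f (x + σ * ξ) - P σ f x| ≤ |f (x + σ * ξ) - f x| + |P σ f x - f x| := by
        rw [abs_sub_comm (P σ f x)]; exact abs_sub_le _ _ _
      have e1 : L * σ ^ 2 ≤ L * σ := by gcongr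
      have e2 : L * σ * (1 + |ξ|) ≤ L * σ * N := by gcongr
      linarith
    · rw [abs_mul, abs_mul, abs_of_nonneg hσ]
      have : |ξ| ≤ N := by linarith
      have := hfb x
      gcongr
    · have : |(f (x + σ * ξ) - P σ f x) - f' x * σ * ξ| ≤ 
          |f (x + σ * ξ) - f x - f' x * (σ * ξ)| + |P σ f x - f x| := by
        have e : (f (x + σ * ξ) - P σ f x) - f' x * σ * ξ =
          (f (x + σ * ξ) - f x - f' x * (σ * ξ)) + -(P σ f x - f x) := by ring
        rw [e, ← abs_neg (P σ f x - f x)]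
        exact abs_add_le _ _
      have e2 : L * σ ^ 2 * (1 + ξ ^ 2) ≤ L * σ ^ 2 * N ^ 2 := by gcongr
      linarith
  have pt : ∀ z : ℝ × ℝ, J ρ s (f (x + σ * z.1)) (g (y + σ * (ρ * z.1 + s * z.2))) ≤
      J ρ s x0 y0 + p * (f (x + σ * z.1) - x0) + q * (g (y + σ * (ρ * z.1 + s * z.2)) - y0)
      + K / 2 * σ ^ 2 * (-ρ * l ^ 2 * a ^ 2 * z.1 ^ 2 + 2 * l * n * a * b * (z.1 * (ρ * z.1 + s * z.2))
        - ρ * n ^ 2 * b ^ 2 * (ρ * z.1 + s * z.2) ^ 2)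
      + D * σ ^ 3 * (1 + |z.1| + |ρ * z.1 + s * z.2|) ^ 3 := by
    intro z
    have h1 := hin _ (hf.mem (x + σ * z.1)) _ (hg.mem (y + σ * (ρ * z.1 + s * z.2)))
    set ζ := ρ * z.1 + s * z.2 with hζ
    set N := 1 + |z.1| + |ζ| with hN
    obtain ⟨a1, a2, a3⟩ := est f f' hf hfb hfd x z.1 N (by rw [hN]; linarith [abs_nonneg ζ])
    obtain ⟨b1, b2, b3⟩ := est g g' hg hgb hgd y ζ N (by rw [hN]; linarith [abs_nonneg z.1])
    have := form_bound h0.le hρ1 hK hKC hl hlC hn hnC a1 b1 a2 b2 a3 b3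
    have e : K / 2 * (-ρ * l ^ 2 * (f' x * σ * z.1) ^ 2 + 2 * l * n * (f' x * σ * z.1) * (g' y * σ * ζ) - ρ * n ^ 2 * (g' y * σ * ζ) ^ 2)
        + 4 * C ^ 3 * (L * σ * N) * (L * σ ^ 2 * N ^ 2) + 8 * C * (L * σ * N) ^ 3 = 
        K / 2 * σ ^ 2 * (-ρ * l ^ 2 * a ^ 2 * z.1 ^ 2 + 2 * l * n * a * b * (z.1 * ζ)
        - ρ * n ^ 2 * b ^ 2 * ζ ^ 2) + D * σ ^ 3 * N ^ 3 := by
      rw [hD, ← ha, ← hb]; ring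
    rw [e] at this
    linarith
  have hfc := hf.cont
  have hgc := hg.cont
  have i1 : Integrable (fun z : ℝ × ℝ => f (x + σ * z.1)) gam2 :=
    fst_mp.integrable_comp_of_integrable (hf.int hδ.le x σ)
  have i2 : Integrable (fun z : ℝ × ℝ => g (y + σ * (ρ * z.1 + s * z.2))) gam2 :=
    (lin_mp hr).integrable_comp_of_integrable (hg.int hδ.le y σ)
  have i3 : Integrable (fun z : ℝ × ℝ => z.1 ^ 2) gam2 := fst_mp.integrable_comp_of_integrable gam_int2
  have i4 : Integrable (fun z : ℝ × ℝ => (ρ * z.1 + s * z.2) ^ 2) gam2 :=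
    (lin_mp hr).integrable_comp_of_integrable gam_int2
  have i5 := cross_int (ρ := ρ) (s := s)
  have i6 := N_int hr
  have v1 : ∫ z : ℝ × ℝ, f (x + σ * z.1) ∂gam2 = x0 :=
    int_fst (h := fun u => f (x + σ * u)) (by fun_prop)
  have v2 : ∫ z : ℝ × ℝ, g (y + σ * (ρ * z.1 + s * z.2)) ∂gam2 = y0 :=
    int_lin (h := fun u => g (y + σ * u)) hr (by fun_prop)
  have v3 : ∫ z : ℝ × ℝ, z.1 ^ 2 ∂gam2 = 1 := (int_fst (h := fun u => u ^ 2) (by fun_prop)).trans gam_sq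
  have v4 : ∫ z : ℝ × ℝ, (ρ * z.1 + s * z.2) ^ 2 ∂gam2 = 1 :=
    (int_lin (h := fun u => u ^ 2) hr (by fun_prop)).trans gam_sq
  have v5 := cross_val (ρ := ρ) (s := s)
  have I1 : Integrable (fun z : ℝ × ℝ => J ρ s x0 y0 + p * (f (x + σ * z.1) - x0)) gam2 :=
    (integrable_const _).add ((i1.sub (integrable_const _)).const_mul p)
  have I2' : Integrable (fun z : ℝ × ℝ => q * (g (y + σ * (ρ * z.1 + s * z.2)) - y0)) gam2 :=
    (i2.sub (integrable_const _)).const_mul q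
  have I3a : Integrable (fun z : ℝ × ℝ => -ρ * l ^ 2 * a ^ 2 * z.1 ^ 2 + 2 * l * n * a * b * (z.1 * (ρ * z.1 + s * z.2))) gam2 :=
    (i3.const_mul _).add (i5.const_mul _)
  have I3' : Integrable (fun z : ℝ × ℝ => K / 2 * σ ^ 2 * (-ρ * l ^ 2 * a ^ 2 * z.1 ^ 2 + 2 * l * n * a * b * (z.1 * (ρ * z.1 + s * z.2))
        - ρ * n ^ 2 * b ^ 2 * (ρ * z.1 + s * z.2) ^ 2)) gam2 :=
    (I3a.sub (i4.const_mul _)).const_mul _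
  have I4' : Integrable (fun z : ℝ × ℝ => D * σ ^ 3 * (1 + |z.1| + |ρ * z.1 + s * z.2|) ^ 3) gam2 :=
    i6.const_mul _
  have I12 := I1.add I2'
  have I123 := I12.add I3'
  have hJ : Integrable (fun z : ℝ × ℝ => J ρ s (f (x + σ * z.1)) (g (y + σ * (ρ * z.1 + s * z.2)))) gam2 :=
    J_comp_int hr (by fun_prop) (by fun_prop)
  have key := integral_mono hJ (I123.add I4') pt
  rw [integral_add' I123 I4', integral_add' I12 I3', integral_add' I1 I2',
    integral_add (integrable_const _) (by exact (i1.sub (integrable_const _)).const_mul p),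
    integral_const_mul, integral_const_mul, integral_const_mul, integral_const_mul,
    integral_sub i1 (integrable_const _), integral_sub i2 (integrable_const _),
    integral_sub I3a (i4.const_mul _), integral_add (i3.const_mul _) (i5.const_mul _),
    integral_const_mul, integral_const_mul, integral_const_mul, v1, v2, v3, v4, v5, ← hM] at key
  simp only [integral_const, probReal_univ, smul_eq_mul, one_mul] at key
  have neg : 0 ≤ K / 2 * σ ^ 2 * (ρ * (l * a - n * b) ^ 2) := by positivity
  linarith

/-- 2-D Gaussian composition -/
lemma comp2 {α β : ℝ} (h : α ^ 2 + β ^ 2 = 1) :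
    MeasurePreserving (fun w : (ℝ × ℝ) × (ℝ × ℝ) => (α * w.1.1 + β * w.2.1, α * w.1.2 + β * w.2.2))
      (gam2.prod gam2) gam2 := by
  refine ⟨by fun_prop, ?_⟩
  let R : ((ℝ × ℝ) × (ℝ × ℝ)) →L[ℝ] (ℝ × ℝ) :=
    α • ContinuousLinearMap.fst ℝ (ℝ × ℝ) (ℝ × ℝ) + β • ContinuousLinearMap.snd ℝ (ℝ × ℝ) (ℝ × ℝ)
  have hR : (fun w : (ℝ × ℝ) × (ℝ × ℝ) => (α * w.1.1 + β * w.2.1, α * w.1.2 + β * w.2.2)) = R := by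
    funext z; simp [R, Prod.ext_iff]
  rw [hR]
  have : IsProbabilityMeasure ((gam2.prod gam2).map R) := Measure.isProbabilityMeasure_map (by fun_prop)
  apply Measure.ext_of_charFunDual
  funext L
  rw [charFunDual_map, charFunDual_prod, charFunDual_gauss_prod, charFunDual_gauss_prod,
    charFunDual_gauss_prod, ← Complex.exp_add]
  congr 1
  have e1 : ∀ v, ((L ∘L R) ∘L (ContinuousLinearMap.inl ℝ (ℝ × ℝ) (ℝ × ℝ))) v = α * L v := by
    intro v
    simp [R]
  have e2 : ∀ v, ((L ∘L R) ∘L (ContinuousLinearMap.inr ℝ (ℝ × ℝ) (ℝ × ℝ))) v = β * L v := by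
    intro v
    simp [R]
  rw [e1, e1, e2, e2]
  norm_cast
  linear_combination (-(L (1, 0)) ^ 2 / 2 - (L (0, 1)) ^ 2 / 2) * h

lemma comp2_int {a b c : ℝ} (h : a ^ 2 + b ^ 2 = c ^ 2) (hc : c ≠ 0) {H : ℝ × ℝ → ℝ}
    (hH : Measurable H) (C : ℝ) (hb : ∀ z, |H z| ≤ C) :
    ∫ z, H (c * z.1, c * z.2) ∂gam2 = 
      ∫ z, (∫ z', H (a * z.1 + b * z'.1, a * z.2 + b * z'.2) ∂gam2) ∂gam2 := by
  have mp := comp2 (α := a / c) (β := b / c) (by field_simp; linarith)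
  have hm : Measurable (fun z : ℝ × ℝ => H (c * z.1, c * z.2)) := hH.comp (by fun_prop)
  have e := integral_map (μ := gam2.prod gam2) mp.measurable.aemeasurable (f := fun z : ℝ × ℝ => H (c * z.1, c * z.2))
    (hm.aestronglyMeasurable)
  rw [mp.map_eq] at e
  rw [e, integral_prod]
  · refine integral_congr_ae (Eventually.of_forall fun z => ?_)
    refine integral_congr_ae (Eventually.of_forall fun z' => ?_)
    simp only
    congr 2 <;> field_simp
  · exact bdd_integrable (hm.comp mp.measurable).aestronglyMeasurable C fun z => hb _

lemma P_comp {a b c : ℝ} (h : a ^ 2 + b ^ 2 = c ^ 2) (hc : c ≠ 0) {δ L : ℝ} {f : ℝ → ℝ}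
    (hδ : 0 ≤ δ) (hf : Cls δ L f) (x : ℝ) : P a (P b f) x = P c f x := by
  have hfc := hf.cont
  have hb : ∀ z, |f z| ≤ 1 := fun z => by
    have := hf.mem z
    rw [abs_le]; constructor <;> linarith [this.1, this.2]
  have := comp2_int h hc (H := fun z => f (x + z.1)) (by fun_prop) 1 (fun z => hb _)
  rw [int_fst (h := fun u => f (x + c * u)) (by fun_prop)] at this
  have e : ∀ z : ℝ × ℝ, ∫ z' : ℝ × ℝ, f (x + (a * z.1 + b * z'.1)) ∂gam2 = P b f (x + a * z.1) := by
    intro z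
    rw [int_fst (h := fun u => f (x + (a * z.1 + b * u))) (by fun_prop), P]
    simp only [add_assoc]
  simp only [e] at this
  have hPc := (hf.P hδ b).cont
  rw [int_fst (h := fun u => P b f (x + a * u)) (by fun_prop)] at this
  rw [P, ← this, P]

lemma multi_step {ρ s δ L : ℝ} (h0 : 0 < ρ) (hs : 0 < s) (hr : ρ ^ 2 + s ^ 2 = 1) (hδ : 0 < δ)
    (hδ2 : δ < 1 / 2) : ∃ D, 0 ≤ D ∧ ∀ σ, 0 < σ → σ ≤ 1 → ∀ k : ℕ, ∀ f g, Cls δ L f → Cls δ L g → ∀ x y,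
      ∫ z : ℝ × ℝ, J ρ s (f (x + σ * √k * z.1)) (g (y + σ * √k * (ρ * z.1 + s * z.2))) ∂gam2
        ≤ J ρ s (P (σ * √k) f x) (P (σ * √k) g y) + k * (D * σ ^ 3) := by
  obtain ⟨D, hD, H⟩ := one_step (L := L) h0 hs hr hδ hδ2
  refine ⟨D, hD, fun σ hσ hσ1 k => ?_⟩
  induction k with
  | zero => intro f g hf hg x y; simp [P]
  | succ k ih =>
    intro f g hf hg x y
    have hfc := hf.cont
    have hgc := hg.cont
    have hJc := J_continuous hr
    set c := σ * √((k + 1 : ℕ) : ℝ) with hcdef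
    set a := σ * √(k : ℝ) with hadef
    have hc : c ≠ 0 := by positivity
    have habc : a ^ 2 + σ ^ 2 = c ^ 2 := by
      rw [hadef, hcdef, mul_pow, mul_pow, sq_sqrt (by positivity), sq_sqrt (by positivity)]
      push_cast; ring
    have hHm : Measurable (fun z : ℝ × ℝ => J ρ s (f (x + z.1)) (g (y + (ρ * z.1 + s * z.2)))) := 
      hJc.measurable.comp (g := fun p : ℝ × ℝ => J ρ s p.1 p.2) (f := fun z : ℝ × ℝ => (f (x + z.1), g (y + (ρ * z.1 + s * z.2)))) (by fun_prop)
    have e := comp2_int habc hc hHm 1 (fun z => by 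
      rw [abs_of_nonneg (J_nonneg _ _ _ _)]; exact J_le_one _ _ _ _)
    have e1 : ∫ z : ℝ × ℝ, J ρ s (f (x + c * z.1)) (g (y + c * (ρ * z.1 + s * z.2))) ∂gam2 =
        ∫ z : ℝ × ℝ, (∫ z' : ℝ × ℝ, J ρ s (f ((x + a * z.1) + σ * z'.1))
          (g ((y + a * (ρ * z.1 + s * z.2)) + σ * (ρ * z'.1 + s * z'.2))) ∂gam2) ∂gam2 := by
      calc _ = _ := by
            refine integral_congr_ae (Eventually.of_forall fun z => ?_)
            simp only
            congr 2; ring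
        _ = _ := e
        _ = _ := by
            refine integral_congr_ae (Eventually.of_forall fun z => ?_)
            refine integral_congr_ae (Eventually.of_forall fun z' => ?_)
            simp only
            congr 2 <;> ring
    rw [e1]
    have hPf := (hf.P hδ.le σ)
    have hPg := (hg.P hδ.le σ)
    have hPfc := hPf.cont
    have hPgc := hPg.cont
    have st : ∫ z : ℝ × ℝ, (∫ z' : ℝ × ℝ, J ρ s (f ((x + a * z.1) + σ * z'.1))
          (g ((y + a * (ρ * z.1 + s * z.2)) + σ * (ρ * z'.1 + s * z'.2))) ∂gam2) ∂gam2 ≤ 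
        ∫ z : ℝ × ℝ, (J ρ s (P σ f (x + a * z.1)) (P σ g (y + a * (ρ * z.1 + s * z.2))) + D * σ ^ 3) ∂gam2 := by
      apply integral_mono_of_nonneg
      · exact Eventually.of_forall fun z => integral_nonneg fun z' => J_nonneg _ _ _ _
      · exact (J_comp_int hr (by fun_prop) (by fun_prop)).add (integrable_const _)
      · exact Eventually.of_forall fun z => H σ hσ.le hσ1 f g hf hg _ _
    rw [integral_add (J_comp_int hr (by fun_prop) (by fun_prop)) (integrable_const _)] at st
    have := ih _ _ hPf hPg x y
    rw [P_comp habc hc hδ.le hf, P_comp habc hc hδ.le hg] at this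
    simp only [integral_const, probReal_univ, smul_eq_mul, one_mul] at st
    push_cast
    linarith

lemma borell_cls {ρ s δ L : ℝ} (h0 : 0 < ρ) (hs : 0 < s) (hr : ρ ^ 2 + s ^ 2 = 1) (hδ : 0 < δ)
    (hδ2 : δ < 1 / 2) {f g : ℝ → ℝ} (hf : Cls δ L f) (hg : Cls δ L g) :
    ∫ z : ℝ × ℝ, J ρ s (f z.1) (g (ρ * z.1 + s * z.2)) ∂gam2
        ≤ J ρ s (∫ u, f u ∂gam) (∫ u, g u ∂gam) := by
  obtain ⟨D, hD, H⟩ := multi_step (L := L) h0 hs hr hδ hδ2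
  have key : ∀ n : ℕ, ∫ z : ℝ × ℝ, J ρ s (f z.1) (g (ρ * z.1 + s * z.2)) ∂gam2
        ≤ J ρ s (∫ u, f u ∂gam) (∫ u, g u ∂gam) + D * (1 / √((n : ℝ) + 1)) := by
    intro n
    have hp : 0 < √((n : ℝ) + 1) := by positivity
    have h1 : 1 ≤ √((n : ℝ) + 1) := by
      rw [Real.one_le_sqrt]; linarith [(Nat.cast_nonneg n : (0:ℝ) ≤ n)]
    have := H (1 / √((n : ℝ) + 1)) (by positivity) (by rw [div_le_one hp]; exact h1) (n + 1) f g hf hg 0 0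
    have e : 1 / √((n : ℝ) + 1) * √((n + 1 : ℕ) : ℝ) = 1 := by
      push_cast; field_simp
    rw [e] at this
    simp only [P, one_mul, zero_add] at this
    have e2 : ((n + 1 : ℕ) : ℝ) * (D * (1 / √((n : ℝ) + 1)) ^ 3) = D * (1 / √((n : ℝ) + 1)) := by
      have : ((n + 1 : ℕ) : ℝ) = √((n : ℝ) + 1) ^ 2 := by
        rw [sq_sqrt (by positivity)]; push_cast; ring
      rw [this]; field_simp
    rw [e2] at this
    exact this
  have lim : Tendsto (fun n : ℕ => J ρ s (∫ u, f u ∂gam) (∫ u, g u ∂gam) + D * (1 / √((n : ℝ) + 1))) atTop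
      (𝓝 (J ρ s (∫ u, f u ∂gam) (∫ u, g u ∂gam) + D * 0)) := by
    apply Tendsto.const_add
    apply Tendsto.const_mul
    have h := tendsto_one_div_add_atTop_nhds_zero_nat (𝕜 := ℝ)
    have h2 := (Real.continuous_sqrt.tendsto 0).comp h
    simp only [Real.sqrt_zero] at h2
    refine h2.congr fun n => ?_
    simp
  have := ge_of_tendsto' lim key
  simpa using this

end LSH

namespace LSH
open Set Filter Topology

/-- second-order and first order bounds for compactly supported smooth functions -/
lemma smooth_bounds {h : ℝ → ℝ} (hc : HasCompactSupport h) (hh : ContDiff ℝ 2 h) :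
    ∃ L, 0 ≤ L ∧ (∀ x u, |h (x + u) - h x| ≤ L * |u|) ∧ Measurable (deriv h) ∧ (∀ x, |deriv h x| ≤ L) ∧
      ∀ x u, |h (x + u) - h x - deriv h x * u| ≤ L * u ^ 2 := by
  have hd : ContDiff ℝ 1 (deriv h) := by
    have : ContDiff ℝ (1 + 1) h := by convert hh; norm_num
    exact (contDiff_succ_iff_deriv.1 this).2.2
  have hdiff : Differentiable ℝ h := hh.differentiable (by norm_num)
  have hdc : HasCompactSupport (deriv h) := hc.deriv
  have hd2 : Continuous (deriv (deriv h)) := hd.continuous_deriv (by norm_num)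
  obtain ⟨M1, hM1⟩ := hdc.exists_bound_of_continuous hd.continuous
  obtain ⟨M2, hM2⟩ := hdc.deriv.exists_bound_of_continuous hd2
  set L := max M1 M2
  have hL1 : ∀ x, |deriv h x| ≤ L := fun x => (hM1 x).trans (le_max_left _ _)
  have hL2 : ∀ x, |deriv (deriv h) x| ≤ L := fun x => (hM2 x).trans (le_max_right _ _)
  have hL0 : 0 ≤ L := (abs_nonneg _).trans (hL1 0)
  have lip1 : ∀ x u, |h (x + u) - h x| ≤ L * |u| := by
    intro x u
    have := Convex.norm_image_sub_le_of_norm_deriv_le (𝕜 := ℝ) (f := h) (s := univ) (x := x) (y := x + u)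
      (fun x _ => hdiff x) (fun x _ => hL1 x) convex_univ (mem_univ _) (mem_univ _)
    simpa using this
  have lip2 : ∀ x u, |deriv h (x + u) - deriv h x| ≤ L * |u| := by
    intro x u
    have := Convex.norm_image_sub_le_of_norm_deriv_le (𝕜 := ℝ) (f := deriv h) (s := univ) (x := x) (y := x + u)
      (fun x _ => (hd.differentiable (by norm_num)) x) (fun x _ => hL2 x) convex_univ (mem_univ _) (mem_univ _)
    simpa using this
  refine ⟨L, hL0, lip1, hd.continuous.measurable, hL1, fun x u => ?_⟩
  have := Convex.norm_image_sub_le_of_norm_hasDerivWithin_le (𝕜 := ℝ)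
    (f := fun t => h (x + t) - deriv h x * t) (f' := fun t => deriv h (x + t) - deriv h x)
    (s := Icc (-|u|) |u|) (x := 0) (y := u) (C := L * |u|) (fun t _ => by
      apply HasDerivAt.hasDerivWithinAt
      have h1 : HasDerivAt (fun t => h (x + t)) (deriv h (x + t)) t := by
        have := (hdiff (x + t)).hasDerivAt.comp_const_add x t
        exact this
      have h2 : HasDerivAt (fun t => deriv h x * t) (deriv h x) t := by
        simpa using (hasDerivAt_id t).const_mul (deriv h x)
      exact h1.sub h2) (fun t ht => by
      refine (lip2 x t).trans ?_
      have : |t| ≤ |u| := abs_le.2 ht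
      gcongr) (convex_Icc _ _) (by simp) (by simp [neg_abs_le, le_abs_self])
  simp only [add_zero, mul_zero, sub_zero, Real.norm_eq_abs] at this
  rw [show L * |u| * |u| = L * u ^ 2 by rw [← sq_abs u]; ring] at this
  convert this using 2; ring

lemma approx_cls {f : ℝ → ℝ} (hm : Measurable f) (h0 : ∀ x, 0 ≤ f x) (h1 : ∀ x, f x ≤ 1)
    {e : ℝ} (he : 0 < e) (he1 : e ≤ 1) : ∃ L F, Cls (e / (1 + 4 * e)) L F ∧ ∫ x, |f x - F x| ∂gam ≤ 8 * e := by
  have hfi : Integrable f gam := bdd_integrable hm.aestronglyMeasurable 1 fun x => by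
    rw [abs_of_nonneg (h0 x)]; exact h1 x
  obtain ⟨g, hgc, hge, hgcont, hgi⟩ := hfi.exists_hasCompactSupport_integral_sub_le he
  set g1 : ℝ → ℝ := fun x => max 0 (min 1 (g x)) with hg1
  have hg1c : Continuous g1 := by fun_prop
  have hg1s : HasCompactSupport g1 := hgc.mono fun x hx => by
    intro h; apply hx; simp [hg1, h]
  obtain ⟨h, hh, hap, hsup⟩ := hg1c.exists_contDiff_approx 2 (ε := fun _ => e) (by fun_prop) (fun _ => he)
  have hhc : HasCompactSupport h := hg1s.mono hsup
  obtain ⟨L, hL, b1, b2, b3, b4⟩ := smooth_bounds hhc hh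
  have hap' : ∀ x, |h x - g1 x| < e := hap
  have hr0 : ∀ x, -e ≤ h x := fun x => by
    have := (abs_lt.1 (hap' x)).1
    have : 0 ≤ g1 x := le_max_left _ _
    linarith
  have hr1 : ∀ x, h x ≤ 1 + e := fun x => by
    have := (abs_lt.1 (hap' x)).2
    have : g1 x ≤ 1 := max_le zero_le_one (min_le_left _ _)
    linarith
  have hk : 0 < 1 + 4 * e := by positivity
  have hki : (1 + 4 * e)⁻¹ ≤ 1 := inv_le_one_of_one_le₀ (by linarith)
  have hki0 : 0 ≤ (1 + 4 * e)⁻¹ := by positivity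
  have sc : ∀ a, |a / (1 + 4 * e)| ≤ |a| := fun a => by
    rw [abs_div, abs_of_pos hk]; exact div_le_self (abs_nonneg _) (by linarith)
  refine ⟨L, fun x => (h x + 2 * e) / (1 + 4 * e), ⟨fun x => ⟨?_, ?_⟩, fun x u => ?_, 
    fun x => deriv h x / (1 + 4 * e), b2.div_const _, fun x => ?_, fun x u => ?_⟩, ?_⟩
  · exact div_le_div_of_nonneg_right (by linarith [hr0 x]) hk.le
  · rw [div_le_iff₀ hk, sub_mul, div_mul_cancel₀ _ hk.ne']; linarith [hr1 x]
  · rw [← sub_div, add_sub_add_right_eq_sub]; exact (sc _).trans (b1 x u)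
  · exact (sc _).trans (b3 x)
  · rw [← sub_div, add_sub_add_right_eq_sub, div_mul_eq_mul_div, ← sub_div]
    exact (sc _).trans (b4 x u)
  · have pt : ∀ x, |f x - (h x + 2 * e) / (1 + 4 * e)| ≤ ‖f x - g x‖ + 7 * e := by
      intro x
      have p1 : |f x - g1 x| ≤ ‖f x - g x‖ := by
        rw [Real.norm_eq_abs]
        have := h0 x
        have := h1 x
        simp only [hg1]
        rcases le_total 1 (g x) with k | k
        · rw [min_eq_left k, max_eq_right zero_le_one, abs_of_nonpos (by linarith), abs_of_nonpos (by linarith)]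
          linarith
        · rw [min_eq_right k]
          rcases le_total 0 (g x) with k | k
          · rw [max_eq_right k]
          · rw [max_eq_left k, abs_of_nonneg (by linarith), abs_of_nonneg (by linarith)]
            linarith
      have p2 : |h x - (h x + 2 * e) / (1 + 4 * e)| ≤ 6 * e := by
        have : h x - (h x + 2 * e) / (1 + 4 * e) = (4 * e * h x - 2 * e) / (1 + 4 * e) := by
          field_simp; ring
        rw [this]
        refine (sc _).trans ?_
        have := hr0 x
        have := hr1 x
        rw [abs_le]; constructor <;> nlinarith
      have p3 := (hap' x).le
      rw [abs_sub_comm] at p3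
      have t1 := abs_sub_le (f x) (g1 x) ((h x + 2 * e) / (1 + 4 * e))
      have t2 := abs_sub_le (g1 x) (h x) ((h x + 2 * e) / (1 + 4 * e))
      linarith
    have i2 : Integrable (fun x => ‖f x - g x‖ + 7 * e) gam := (hfi.sub hgi).norm.add (integrable_const _)
    have := integral_mono_of_nonneg (μ := gam) (Eventually.of_forall fun x => abs_nonneg _) i2
      (Eventually.of_forall pt)
    rw [integral_add (by exact (hfi.sub hgi).norm) (integrable_const _)] at this
    simp only [integral_const, probReal_univ, smul_eq_mul, one_mul] at this
    linarith

lemma Cls.mono {δ L L' : ℝ} {f : ℝ → ℝ} (h : Cls δ L f) (hL : L ≤ L') : Cls δ L' f := by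
  obtain ⟨f', a, b, c⟩ := h.der
  exact ⟨h.mem, fun x u => (h.lip x u).trans (by gcongr), f', a, fun x => (b x).trans hL,
    fun x u => (c x u).trans (by gcongr)⟩

lemma borell_1d {ρ s : ℝ} (h0 : 0 < ρ) (hs : 0 < s) (hr : ρ ^ 2 + s ^ 2 = 1) {f g : ℝ → ℝ}
    (hf : Measurable f) (hf0 : ∀ x, 0 ≤ f x) (hf1 : ∀ x, f x ≤ 1)
    (hg : Measurable g) (hg0 : ∀ x, 0 ≤ g x) (hg1 : ∀ x, g x ≤ 1) :
    ∫ z : ℝ × ℝ, J ρ s (f z.1) (g (ρ * z.1 + s * z.2)) ∂gam2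
        ≤ J ρ s (∫ u, f u ∂gam) (∫ u, g u ∂gam) := by
  have key : ∀ e, 0 < e → e ≤ 1 → ∫ z : ℝ × ℝ, J ρ s (f z.1) (g (ρ * z.1 + s * z.2)) ∂gam2
        ≤ J ρ s (∫ u, f u ∂gam) (∫ u, g u ∂gam) + 32 * e := by
    intro e he he1
    obtain ⟨L1, F, hF, hFe⟩ := approx_cls hf hf0 hf1 he he1
    obtain ⟨L2, G, hG, hGe⟩ := approx_cls hg hg0 hg1 he he1
    have hδ : 0 < e / (1 + 4 * e) := by positivity
    have hδ2 : e / (1 + 4 * e) < 1 / 2 := by rw [div_lt_div_iff₀ (by positivity) (by norm_num)]; linarith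
    have hB := borell_cls h0 hs hr hδ hδ2 (hF.mono (le_max_left L1 L2)) (hG.mono (le_max_right L1 L2))
    have hFc := hF.cont
    have hGc := hG.cont
    have hfi : Integrable f gam := bdd_integrable hf.aestronglyMeasurable 1 fun x => by
      rw [abs_of_nonneg (hf0 x)]; exact hf1 x
    have hgi : Integrable g gam := bdd_integrable hg.aestronglyMeasurable 1 fun x => by
      rw [abs_of_nonneg (hg0 x)]; exact hg1 x
    have hFi : Integrable F gam := by simpa using hF.int hδ.le 0 1
    have hGi : Integrable G gam := by simpa using hG.int hδ.le 0 1
    have iF := (hfi.sub hFi).abs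
    have iG := (hgi.sub hGi).abs
    have dF : |(∫ u, F u ∂gam) - ∫ u, f u ∂gam| ≤ 8 * e := by
      rw [abs_sub_comm, ← integral_sub hfi hFi]
      exact abs_integral_le_integral_abs.trans hFe
    have dG : |(∫ u, G u ∂gam) - ∫ u, g u ∂gam| ≤ 8 * e := by
      rw [abs_sub_comm, ← integral_sub hgi hGi]
      exact abs_integral_le_integral_abs.trans hGe
    have l1 := (abs_le.1 (J_lip hr (∫ u, f u ∂gam) (∫ u, g u ∂gam) (∫ u, F u ∂gam) (∫ u, G u ∂gam))).2
    have jF : Integrable (fun z : ℝ × ℝ => |f z.1 - F z.1|) gam2 := fst_mp.integrable_comp_of_integrable iF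
    have jG : Integrable (fun z : ℝ × ℝ => |g (ρ * z.1 + s * z.2) - G (ρ * z.1 + s * z.2)|) gam2 :=
      (lin_mp hr).integrable_comp_of_integrable iG
    have jJ : Integrable (fun z : ℝ × ℝ => J ρ s (F z.1) (G (ρ * z.1 + s * z.2))) gam2 :=
      J_comp_int hr (by fun_prop) (by fun_prop)
    have jJ' : Integrable (fun z : ℝ × ℝ => J ρ s (f z.1) (g (ρ * z.1 + s * z.2))) gam2 :=
      J_comp_int hr (by fun_prop) (by fun_prop)
    have mono := integral_mono jJ' ((jJ.add jF).add jG) (fun z => by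
      have := (abs_le.1 (J_lip hr (F z.1) (G (ρ * z.1 + s * z.2)) (f z.1) (g (ρ * z.1 + s * z.2)))).2
      simp only [Pi.add_apply]
      linarith)
    rw [integral_add' (jJ.add jF) jG, integral_add' jJ jF] at mono
    have e1 : ∫ z : ℝ × ℝ, |f z.1 - F z.1| ∂gam2 = ∫ u, |f u - F u| ∂gam := 
      int_fst (h := fun u => |f u - F u|) iF.aestronglyMeasurable
    have e2 : ∫ z : ℝ × ℝ, |g (ρ * z.1 + s * z.2) - G (ρ * z.1 + s * z.2)| ∂gam2 = ∫ u, |g u - G u| ∂gam := 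
      int_lin (h := fun u => |g u - G u|) hr iG.aestronglyMeasurable
    rw [e1, e2] at mono
    linarith
  refine le_of_forall_pos_le_add fun e he => ?_
  have := key (min 1 (e / 32)) (by positivity) (min_le_left _ _)
  linarith [min_le_right 1 (e / 32)]

end LSH

namespace LSH
open Set Filter Topology

lemma cons_meas {α : Type*} [MeasurableSpace α] (d : ℕ) :
    Measurable (fun p : α × (Fin d → α) => (Fin.cons p.1 p.2 : Fin (d + 1) → α)) := by
  rw [measurable_pi_iff]
  intro i
  refine Fin.cases ?_ (fun j => ?_) i
  · simpa using measurable_fst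
  · simp only [Fin.cons_succ]
    exact (measurable_pi_apply j).comp measurable_snd

lemma int_cons {α : Type*} [MeasurableSpace α] (μ : Measure α) [IsProbabilityMeasure μ] {d : ℕ}
    {H : (Fin (d + 1) → α) → ℝ} (hH : Measurable H) (C : ℝ) (hC : ∀ x, |H x| ≤ C) :
    ∫ ω, H ω ∂(Measure.pi fun _ => μ) =
      ∫ a, (∫ ω, H (Fin.cons a ω) ∂(Measure.pi fun _ => μ)) ∂μ := by
  have mp := (measurePreserving_piFinSuccAbove (fun _ : Fin (d + 1) => μ) 0).symm
  rw [← mp.integral_comp' , integral_prod]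
  · refine integral_congr_ae (Eventually.of_forall fun a => ?_)
    refine integral_congr_ae (Eventually.of_forall fun ω => ?_)
    simp only [MeasurableEquiv.piFinSuccAbove]
    congr 1
    funext i
    refine Fin.cases ?_ (fun j => ?_) i
    · simp
    · simp
  · exact bdd_integrable (hH.comp mp.measurable).aestronglyMeasurable C fun z => hC _

lemma Jm {ρ s : ℝ} (hr : ρ ^ 2 + s ^ 2 = 1) {α : Type*} [MeasurableSpace α] {f g : α → ℝ}
    (hf : Measurable f) (hg : Measurable g) : Measurable (fun z => J ρ s (f z) (g z)) :=
  (J_continuous hr).measurable.comp (hf.prodMk hg)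

lemma borell_nd {ρ s : ℝ} (h0 : 0 < ρ) (hs : 0 < s) (hr : ρ ^ 2 + s ^ 2 = 1) (d : ℕ) :
    ∀ f g : (Fin d → ℝ) → ℝ, Measurable f → (∀ x, 0 ≤ f x) → (∀ x, f x ≤ 1) →
      Measurable g → (∀ x, 0 ≤ g x) → (∀ x, g x ≤ 1) →
    ∫ ω : Fin d → ℝ × ℝ, J ρ s (f fun i => (ω i).1) (g fun i => ρ * (ω i).1 + s * (ω i).2)
        ∂(Measure.pi fun _ => gam2)
      ≤ J ρ s (∫ x, f x ∂(Measure.pi fun _ => gam)) (∫ x, g x ∂(Measure.pi fun _ => gam)) := by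
  induction d with
  | zero =>
    intro f g _ _ _ _ _ _
    have e1 : ∀ x, f x = f 0 := fun x => congrArg f (Subsingleton.elim _ _)
    have e2 : ∀ x, g x = g 0 := fun x => congrArg g (Subsingleton.elim _ _)
    simp only [e1, e2, integral_const, probReal_univ, smul_eq_mul, one_mul]
    exact le_rfl
  | succ d ih =>
    intro f g hf hf0 hf1 hg hg0 hg1
    have bJ : ∀ x y, |J ρ s x y| ≤ 1 := fun x y => by
      rw [abs_of_nonneg (J_nonneg _ _ _ _)]; exact J_le_one _ _ _ _
    have mX : ∀ n, Measurable (fun ω : Fin n → ℝ × ℝ => fun i => (ω i).1) := fun n => by fun_prop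
    have mY : ∀ n, Measurable (fun ω : Fin n → ℝ × ℝ => fun i => ρ * (ω i).1 + s * (ω i).2) :=
      fun n => by fun_prop
    have E := int_cons gam2 (Jm hr (hf.comp (mX (d + 1))) (hg.comp (mY (d + 1)))) 1 (fun x => bJ _ _)
    simp only [Function.comp_apply] at E
    rw [E]
    have eX : ∀ (z : ℝ × ℝ) (ω : Fin d → ℝ × ℝ), 
        (fun i => ((Fin.cons z ω : Fin (d+1) → ℝ × ℝ) i).1) = Fin.cons z.1 (fun i => (ω i).1) := by
      intro z ω; funext i
      refine Fin.cases ?_ (fun j => ?_) i <;> simp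
    have eY : ∀ (z : ℝ × ℝ) (ω : Fin d → ℝ × ℝ), 
        (fun i => ρ * ((Fin.cons z ω : Fin (d+1) → ℝ × ℝ) i).1 + s * ((Fin.cons z ω : Fin (d+1) → ℝ × ℝ) i).2)
          = Fin.cons (ρ * z.1 + s * z.2) (fun i => ρ * (ω i).1 + s * (ω i).2) := by
      intro z ω; funext i
      refine Fin.cases ?_ (fun j => ?_) i <;> simp
    simp only [eX, eY]
    have main : ∀ h : (Fin (d+1) → ℝ) → ℝ, Measurable h → (∀ x, 0 ≤ h x) → (∀ x, h x ≤ 1) →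
        Measurable (fun a => ∫ x, h (Fin.cons a x) ∂(Measure.pi fun _ : Fin d => gam)) ∧
        (∀ a, 0 ≤ ∫ x, h (Fin.cons a x) ∂(Measure.pi fun _ : Fin d => gam)) ∧
        (∀ a, ∫ x, h (Fin.cons a x) ∂(Measure.pi fun _ : Fin d => gam) ≤ 1) ∧
        (∫ a, (∫ x, h (Fin.cons a x) ∂(Measure.pi fun _ : Fin d => gam)) ∂gam
          = ∫ x, h x ∂(Measure.pi fun _ => gam)) ∧ ∀ a : ℝ, Measurable (fun x : Fin d → ℝ => h (Fin.cons a x)) := by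
      intro h hm h0 h1
      have hma : ∀ a : ℝ, Measurable (fun x : Fin d → ℝ => h (Fin.cons a x)) := fun a => 
        (hm.comp (cons_meas d)).comp measurable_prodMk_left
      refine ⟨?_, fun a => integral_nonneg fun x => h0 _, fun a => ?_, ?_, hma⟩
      · have hsm : StronglyMeasurable (fun p : ℝ × (Fin d → ℝ) => h (Fin.cons p.1 p.2)) :=
          (hm.comp (cons_meas d)).stronglyMeasurable
        exact (hsm.integral_prod_right' (ν := Measure.pi fun _ : Fin d => gam)).measurable
      · have := integral_mono (μ := Measure.pi fun _ : Fin d => gam)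
          (bdd_integrable (hma a).aestronglyMeasurable 1 fun x => by
            rw [abs_of_nonneg (h0 _)]; exact h1 _) (integrable_const (1:ℝ)) (fun x => h1 _)
        simpa using this
      · exact (int_cons gam hm 1 (fun x => by rw [abs_of_nonneg (h0 _)]; exact h1 _)).symm
    obtain ⟨a1, a2, a3, a4, a5⟩ := main f hf hf0 hf1
    obtain ⟨b1, b2, b3, b4, b5⟩ := main g hg hg0 hg1
    have B := borell_1d h0 hs hr a1 a2 a3 b1 b2 b3
    rw [a4, b4] at B
    refine le_trans ?_ B
    apply integral_mono_of_nonneg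
    · exact Eventually.of_forall fun z => integral_nonneg fun _ => J_nonneg _ _ _ _
    · exact J_comp_int hr (a1.comp measurable_fst) (b1.comp (lin_mp hr).measurable)
    · refine Eventually.of_forall fun z => ?_
      exact ih (fun x => f (Fin.cons z.1 x)) (fun x => g (Fin.cons (ρ * z.1 + s * z.2) x))
        (a5 _) (fun _ => hf0 _) (fun _ => hf1 _) (b5 _) (fun _ => hg0 _) (fun _ => hg1 _)

lemma borell_set {ρ s : ℝ} (h0 : 0 < ρ) (hs : 0 < s) (hr : ρ ^ 2 + s ^ 2 = 1) {d : ℕ}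
    {A : Set (Fin d → ℝ)} (hA : MeasurableSet A) :
    (Measure.pi fun _ : Fin d => gam2).real {ω | (fun i => (ω i).1) ∈ A ∧ 
        (fun i => ρ * (ω i).1 + s * (ω i).2) ∈ A}
      ≤ J ρ s ((Measure.pi fun _ : Fin d => gam).real A) ((Measure.pi fun _ : Fin d => gam).real A) := by
  have hm : Measurable (A.indicator (fun _ => (1:ℝ))) := measurable_const.indicator hA
  have b0 : ∀ x, 0 ≤ A.indicator (fun _ => (1:ℝ)) x := fun x => indicator_nonneg (fun _ _ => zero_le_one) x
  have b1 : ∀ x, A.indicator (fun _ => (1:ℝ)) x ≤ 1 := fun x => 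
    indicator_le' (fun _ _ => le_rfl) (fun _ _ => zero_le_one) x
  have := borell_nd h0 hs hr d _ _ hm b0 b1 hm b0 b1
  rw [integral_indicator hA] at this
  simp only [setIntegral_const, smul_eq_mul, mul_one] at this
  refine le_trans (le_of_eq ?_) this
  have mX : Measurable (fun ω : Fin d → ℝ × ℝ => fun i => (ω i).1) := by fun_prop
  have mY : Measurable (fun ω : Fin d → ℝ × ℝ => fun i => ρ * (ω i).1 + s * (ω i).2) := by fun_prop
  have hS : MeasurableSet {ω : Fin d → ℝ × ℝ | (fun i => (ω i).1) ∈ A ∧ 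
        (fun i => ρ * (ω i).1 + s * (ω i).2) ∈ A} := (mX hA).inter (mY hA)
  have e : ∀ ω : Fin d → ℝ × ℝ, J ρ s (A.indicator (fun _ => (1:ℝ)) fun i => (ω i).1)
      (A.indicator (fun _ => (1:ℝ)) fun i => ρ * (ω i).1 + s * (ω i).2) = 
      indicator {ω : Fin d → ℝ × ℝ | (fun i => (ω i).1) ∈ A ∧ 
        (fun i => ρ * (ω i).1 + s * (ω i).2) ∈ A} (fun _ => (1:ℝ)) ω := by
    intro ω
    by_cases k1 : (fun i => (ω i).1) ∈ A <;> by_cases k2 : (fun i => ρ * (ω i).1 + s * (ω i).2) ∈ A <;>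
    simp [indicator, k1, k2, J_one_one, J_zero_left, J_zero_right]
  simp only [e]
  rw [integral_indicator hS]
  simp

/-- marginals -/
lemma X_mp (d : ℕ) : MeasurePreserving (fun ω : Fin d → ℝ × ℝ => fun i => (ω i).1)
    (Measure.pi fun _ => gam2) (Measure.pi fun _ => gam) :=
  measurePreserving_pi _ _ (fun _ => fst_mp)

lemma Y_mp {ρ s : ℝ} (hr : ρ ^ 2 + s ^ 2 = 1) (d : ℕ) :
    MeasurePreserving (fun ω : Fin d → ℝ × ℝ => fun i => ρ * (ω i).1 + s * (ω i).2)
    (Measure.pi fun _ => gam2) (Measure.pi fun _ => gam) :=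
  measurePreserving_pi _ _ (fun _ => lin_mp hr)

end LSH

namespace LSH
open Set Filter Topology

lemma pi_gam_density (d : ℕ) : (Measure.pi fun _ : Fin d => gam) =
    (volume : Measure (Fin d → ℝ)).withDensity (fun x => ENNReal.ofReal (∏ i, gaussianPDFReal 0 1 (x i))) := by
  have hi : Integrable (gaussianPDFReal 0 1) := integrable_gaussianPDFReal 0 1
  have hn : ∀ x : Fin d → ℝ, 0 ≤ ∏ i, gaussianPDFReal 0 1 (x i) := fun x =>
    Finset.prod_nonneg fun i _ => gaussianPDFReal_nonneg _ _ _
  have hI : Integrable (fun x : Fin d → ℝ => ∏ i, gaussianPDFReal 0 1 (x i)) :=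
    Integrable.fintype_prod (fun _ => hi)
  refine Measure.pi_eq fun s hs => ?_
  have hbox : MeasurableSet (Set.pi univ s) := MeasurableSet.univ_pi hs
  rw [withDensity_apply _ hbox, ← ofReal_integral_eq_lintegral_ofReal hI.integrableOn
    (Eventually.of_forall hn), ← integral_indicator hbox]
  have e : ∀ x : Fin d → ℝ, (Set.pi univ s).indicator (fun x => ∏ i, gaussianPDFReal 0 1 (x i)) x
      = ∏ i, (s i).indicator (gaussianPDFReal 0 1) (x i) := by
    intro x
    by_cases hx : x ∈ Set.pi univ s
    · rw [indicator_of_mem hx]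
      refine Finset.prod_congr rfl fun i _ => ?_
      rw [indicator_of_mem (hx i (mem_univ _))]
    · rw [indicator_of_notMem hx]
      simp only [Set.mem_pi, mem_univ, true_imp_iff, not_forall] at hx
      obtain ⟨i, hi⟩ := hx
      exact (Finset.prod_eq_zero (Finset.mem_univ i) (indicator_of_notMem hi _)).symm
  simp only [e]
  rw [integral_fintype_prod_volume_eq_prod (fun i => (s i).indicator (gaussianPDFReal 0 1)),
    ENNReal.ofReal_prod_of_nonneg]
  · refine Finset.prod_congr rfl fun i _ => ?_
    rw [gaussianReal_apply_eq_integral _ (by norm_num), integral_indicator (hs i)]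
  · intro i _
    exact integral_nonneg fun x => indicator_nonneg (fun _ _ => gaussianPDFReal_nonneg _ _ _) x

/-- radial density -/
def rad (d : ℕ) (r : ℝ) : ENNReal := ENNReal.ofReal ((√(2 * π))⁻¹ ^ d * exp (-r ^ 2 / 2))

lemma rad_meas (d : ℕ) : Measurable (rad d) := by unfold rad; fun_prop

abbrev Ed (d : ℕ) := EuclideanSpace ℝ (Fin d)
abbrev Sp (d : ℕ) := Metric.sphere (0 : Ed d) 1

lemma dens_eq (d : ℕ) (x : Fin d → ℝ) :
    ENNReal.ofReal (∏ i, gaussianPDFReal 0 1 (x i)) = rad d ‖(WithLp.toLp 2 x : Ed d)‖ := by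
  rw [rad, EuclideanSpace.norm_sq_eq]
  congr 1
  simp only [gaussianPDFReal, NNReal.coe_one, mul_one, sub_zero, Real.norm_eq_abs, sq_abs]
  rw [Finset.prod_mul_distrib, ← Real.exp_sum]
  simp [Finset.sum_div, Finset.sum_neg_distrib, neg_div]

lemma lint_gauss (d : ℕ) {F : Ed d → ENNReal} (hF : Measurable F) :
    ∫⁻ x : Fin d → ℝ, F (WithLp.toLp 2 x) ∂(Measure.pi fun _ => gam) = 
      ∫⁻ y : Ed d, rad d ‖y‖ * F y := by
  have hm : Measurable (WithLp.toLp 2 : (Fin d → ℝ) → Ed d) := (PiLp.volume_preserving_toLp (Fin d)).measurable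
  rw [pi_gam_density, lintegral_withDensity_eq_lintegral_mul]
  · simp only [Pi.mul_apply, dens_eq]
    have := (PiLp.volume_preserving_toLp (Fin d)).lintegral_comp (f := fun y : Ed d => rad d ‖y‖ * F y)
      (((rad_meas d).comp measurable_norm).mul hF)
    exact this
  · simp only [dens_eq]
    exact (rad_meas d).comp (measurable_norm.comp hm)
  · exact hF.comp hm

/-- normalisation -/
def nrm {d : ℕ} (θ : Sp d) (y : Ed d) : Sp d :=
  ⟨if y = 0 then θ.1 else ‖y‖⁻¹ • y, by
    split_ifs with h
    · exact θ.2
    · rw [mem_sphere_zero_iff_norm]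
      exact norm_smul_inv_norm h⟩

lemma nrm_meas {d : ℕ} (θ : Sp d) : Measurable (nrm θ) := by
  apply Measurable.subtype_mk
  refine Measurable.ite (measurableSet_singleton 0) measurable_const ?_
  fun_prop

lemma sphere_law_aux (d : ℕ) (hd : 1 ≤ d) (θ : Sp d) {S : Set (Sp d)} (hS : MeasurableSet S) :
    (Measure.pi fun _ : Fin d => gam) {x | nrm θ (WithLp.toLp 2 x) ∈ S} =
      (volume : Measure (Ed d)).toSphere S * ∫⁻ r : Ioi (0:ℝ), rad d r ∂(Measure.volumeIoiPow (Module.finrank ℝ (Ed d) - 1)) := by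
  have : Nonempty (Fin d) := ⟨⟨0, hd⟩⟩
  have : Nontrivial (Ed d) := inferInstance
  set F : Ed d → ENNReal := (nrm θ ⁻¹' S).indicator 1 with hF
  have hFm : Measurable F := measurable_one.indicator (nrm_meas θ hS)
  have hm : Measurable (WithLp.toLp 2 : (Fin d → ℝ) → Ed d) := (PiLp.volume_preserving_toLp (Fin d)).measurable
  have e1 : (Measure.pi fun _ : Fin d => gam) {x | nrm θ (WithLp.toLp 2 x) ∈ S} =
      ∫⁻ x : Fin d → ℝ, F (WithLp.toLp 2 x) ∂(Measure.pi fun _ => gam) := by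
    have hset : MeasurableSet {x : Fin d → ℝ | nrm θ (WithLp.toLp 2 x) ∈ S} := hm (nrm_meas θ hS)
    rw [← lintegral_indicator_one hset]
    rfl
  rw [e1, lint_gauss d hFm]
  have mp := (volume : Measure (Ed d)).measurePreserving_homeomorphUnitSphereProd
  have e2 : ∫⁻ y : Ed d, rad d ‖y‖ * F y = ∫⁻ y : ({0}ᶜ : Set (Ed d)), rad d ‖y.1‖ * F y.1 ∂((volume : Measure (Ed d)).comap (Subtype.val : ({0}ᶜ : Set (Ed d)) → Ed d)) := by
    rw [lintegral_subtype_comap (measurableSet_singleton _).compl (fun y : Ed d => rad d ‖y‖ * F y),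
      restrict_compl_singleton]
  rw [e2]
  have e3 : ∀ y : ({0}ᶜ : Set (Ed d)), rad d ‖y.1‖ * F y.1 = 
      (fun p : Sp d × Ioi (0:ℝ) => S.indicator 1 p.1 * rad d p.2) (homeomorphUnitSphereProd (Ed d) y) := by
    intro y
    have hy : y.1 ≠ 0 := y.2
    have h1 : (homeomorphUnitSphereProd (Ed d) y).1 = nrm θ y.1 := by
      apply Subtype.ext
      simp [nrm, hy]
    have h2 : ((homeomorphUnitSphereProd (Ed d) y).2 : ℝ) = ‖y.1‖ := by simp
    simp only [h1, h2, mul_comm]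
    rfl
  simp only [e3]
  have hm2 : Measurable (fun p : Sp d × Ioi (0:ℝ) => S.indicator (1 : Sp d → ENNReal) p.1 * rad d p.2) :=
    ((measurable_one.indicator hS).comp measurable_fst).mul ((rad_meas d).comp (measurable_subtype_coe.comp measurable_snd))
  have hm3 : Measurable (fun r : Ioi (0:ℝ) => rad d r) := (rad_meas d).comp measurable_subtype_coe
  rw [mp.lintegral_comp hm2]
  refine (lintegral_prod_mul (measurable_one.indicator hS).aemeasurable hm3.aemeasurable).trans ?_
  rw [lintegral_indicator_one hS]

lemma sphere_law (d : ℕ) (hd : 1 ≤ d) (θ : Sp d) {S : Set (Sp d)} (hS : MeasurableSet S) :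
    (Measure.pi fun _ : Fin d => gam) {x | nrm θ (WithLp.toLp 2 x) ∈ S} = sphereMeasure d S := by
  have : Nonempty (Fin d) := ⟨⟨0, hd⟩⟩
  have : Nontrivial (Ed d) := inferInstance
  have h1 := sphere_law_aux d hd θ MeasurableSet.univ
  have h2 := sphere_law_aux d hd θ hS
  simp only [mem_univ] at h1
  rw [show {x : Fin d → ℝ | True} = univ from by ext; simp, measure_univ] at h1
  rw [h2, sphereMeasure, Measure.smul_apply, smul_eq_mul, mul_comm]
  congr 1
  rw [mul_comm] at h1
  exact ENNReal.eq_inv_of_mul_eq_one_left h1.symm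

end LSH

namespace LSH
open Set Filter Topology

def qf (ρ0 ρ s : ℝ) (z : ℝ × ℝ) : ℝ :=
  z.1 * (ρ * z.1 + s * z.2) - ρ0 / 2 * (z.1 ^ 2 + (ρ * z.1 + s * z.2) ^ 2)

lemma holder442 : ENNReal.HolderTriple 4 4 2 := by
  constructor
  have h4 : (4 : ENNReal) = ENNReal.ofReal 4 := by simp
  have h2 : (2 : ENNReal) = ENNReal.ofReal 2 := by simp
  rw [h4, h2, ← ENNReal.ofReal_inv_of_pos (by norm_num), ← ENNReal.ofReal_inv_of_pos (by norm_num),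
    ← ENNReal.ofReal_add (by norm_num) (by norm_num)]
  norm_num

lemma qf_memLp {ρ0 ρ s : ℝ} (hr : ρ ^ 2 + s ^ 2 = 1) : MemLp (qf ρ0 ρ s) 2 gam2 := by
  have := holder442
  have g4 : MemLp (fun u : ℝ => u) 4 gam := by simpa using gam_memLpN 4
  have h1 : MemLp (fun z : ℝ × ℝ => z.1) 4 gam2 := g4.comp_measurePreserving fst_mp
  have h2 : MemLp (fun z : ℝ × ℝ => ρ * z.1 + s * z.2) 4 gam2 := g4.comp_measurePreserving (lin_mp hr)
  have a : MemLp (fun z : ℝ × ℝ => z.1 * (ρ * z.1 + s * z.2)) 2 gam2 := h2.mul' h1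
  have b : MemLp (fun z : ℝ × ℝ => z.1 * z.1) 2 gam2 := h1.mul' h1
  have c : MemLp (fun z : ℝ × ℝ => (ρ * z.1 + s * z.2) * (ρ * z.1 + s * z.2)) 2 gam2 := h2.mul' h2
  have := a.sub ((b.add c).const_mul (ρ0 / 2))
  refine (memLp_congr_ae (Eventually.of_forall fun z => ?_)).1 this
  simp only [qf, Pi.sub_apply, Pi.add_apply]
  ring

lemma qf_mean {ρ0 ρ s : ℝ} (hr : ρ ^ 2 + s ^ 2 = 1) : ∫ z, qf ρ0 ρ s z ∂gam2 = ρ - ρ0 := by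
  have hm : AEStronglyMeasurable (fun u : ℝ => u ^ 2) gam := gam_int2.1
  have i1 : Integrable (fun z : ℝ × ℝ => z.1 ^ 2) gam2 := fst_mp.integrable_comp_of_integrable gam_int2
  have i2 : Integrable (fun z : ℝ × ℝ => (ρ * z.1 + s * z.2) ^ 2) gam2 :=
    (lin_mp hr).integrable_comp_of_integrable gam_int2
  unfold qf
  rw [integral_sub cross_int (by exact (i1.add i2).const_mul _), integral_const_mul, integral_add i1 i2,
    cross_val, int_fst hm, int_lin hr hm, gam_sq]
  ring

abbrev piG (d : ℕ) : Measure (Fin d → ℝ × ℝ) := Measure.pi fun _ : Fin d => gam2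

lemma bad_small {ρ0 ρ s : ℝ} (hr : ρ ^ 2 + s ^ 2 = 1) (h0 : ρ0 < ρ) (d : ℕ) (hd : 1 ≤ d) :
    (piG d).real {ω | ∑ i, qf ρ0 ρ s (ω i) ≤ 0} ≤
      (Var[qf ρ0 ρ s; gam2] / (ρ - ρ0) ^ 2) / d := by
  have hq := qf_memLp (ρ0 := ρ0) hr
  set X : (Fin d → ℝ × ℝ) → ℝ := ∑ i, fun ω ↦ qf ρ0 ρ s (ω i) with hX
  have hi : ∀ i : Fin d, MemLp (fun ω : Fin d → ℝ × ℝ => qf ρ0 ρ s (ω i)) 2 (piG d) := fun i =>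
    hq.comp_measurePreserving (measurePreserving_eval (fun _ : Fin d => gam2) i)
  have hXm : MemLp X 2 (piG d) := memLp_finsetSum' _ fun i _ => hi i
  have hXe : ∀ ω, X ω = ∑ i, qf ρ0 ρ s (ω i) := fun ω => by simp [hX]
  have hv : Var[X; piG d] = d * Var[qf ρ0 ρ s; gam2] := by
    have := variance_sum_pi (μ := fun _ : Fin d => gam2) (X := fun _ => qf ρ0 ρ s) (fun _ => hq)
    rw [hX]
    rw [this]; simp
  have hmean : ∫ ω, X ω ∂(piG d) = d * (ρ - ρ0) := by
    simp only [hXe]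
    rw [integral_finsetSum _ fun i _ => (hi i).integrable (by norm_num)]
    have : ∀ i : Fin d, ∫ ω, qf ρ0 ρ s (ω i) ∂(piG d) = ρ - ρ0 := fun i => by
      rw [← qf_mean (ρ0 := ρ0) hr]
      exact integral_comp_eval (μ := fun _ : Fin d => gam2) (i := i) hq.1
    simp [this]
    try ring
  have hdp : (0:ℝ) < d := by exact_mod_cast hd
  have hc : 0 < d * (ρ - ρ0) := mul_pos hdp (by linarith)
  have ch := meas_ge_le_variance_div_sq hXm hc
  rw [hmean, hv] at ch
  have hsub : {ω | ∑ i, qf ρ0 ρ s (ω i) ≤ 0} ⊆ {ω | d * (ρ - ρ0) ≤ |X ω - d * (ρ - ρ0)|} := by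
    intro ω hω
    have : X ω ≤ 0 := by rw [hXe]; exact hω
    rw [mem_ofPred_eq]
    rw [abs_of_nonpos (by linarith)]
    linarith
  have h2 := (measure_mono (μ := piG d) hsub).trans ch
  have hnn : 0 ≤ d * Var[qf ρ0 ρ s; gam2] / (d * (ρ - ρ0)) ^ 2 := by
    have := variance_nonneg (qf ρ0 ρ s) gam2
    positivity
  have h3 := ENNReal.toReal_mono ENNReal.ofReal_ne_top h2
  rw [ENNReal.toReal_ofReal hnn] at h3
  refine h3.trans (le_of_eq ?_)
  have : ρ - ρ0 ≠ 0 := by linarith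
  field_simp

lemma close_of_pos {d : ℕ} {τ ρ0 : ℝ} (hτ : 0 < τ) (h0 : 0 < ρ0) (he : τ ^ 2 = 2 - 2 * ρ0) (θ : Sp d)
    (x y : Fin d → ℝ) (h : 0 < ∑ i, (x i * y i - ρ0 / 2 * (x i ^ 2 + y i ^ 2))) :
    dist (nrm θ (WithLp.toLp 2 x)) (nrm θ (WithLp.toLp 2 y)) ≤ τ := by
  set X : Ed d := WithLp.toLp 2 x with hX
  set Y : Ed d := WithLp.toLp 2 y with hY
  have nX : ‖X‖ ^ 2 = ∑ i, x i ^ 2 := by rw [EuclideanSpace.real_norm_sq_eq]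
  have nY : ‖Y‖ ^ 2 = ∑ i, y i ^ 2 := by rw [EuclideanSpace.real_norm_sq_eq]
  have nXY : inner ℝ X Y = ∑ i, x i * y i := by
    rw [PiLp.inner_apply]
    refine Finset.sum_congr rfl fun i _ => ?_
    simp [hX, hY, mul_comm]
  rw [Finset.sum_sub_distrib, ← Finset.mul_sum, Finset.sum_add_distrib, ← nX, ← nY, ← nXY] at h
  have hX0 : X ≠ 0 := by
    intro h1
    rw [h1] at h
    simp only [inner_zero_left] at h
    have : 0 ≤ ρ0 / 2 * (‖(0 : Ed d)‖ ^ 2 + ‖Y‖ ^ 2) := by positivity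
    linarith
  have hY0 : Y ≠ 0 := by
    intro h1
    rw [h1] at h
    simp only [inner_zero_right] at h
    have : 0 ≤ ρ0 / 2 * (‖X‖ ^ 2 + ‖(0 : Ed d)‖ ^ 2) := by positivity
    linarith
  have pX : 0 < ‖X‖ := norm_pos_iff.2 hX0
  have pY : 0 < ‖Y‖ := norm_pos_iff.2 hY0
  have hin : ρ0 * (‖X‖ * ‖Y‖) ≤ inner ℝ X Y := by
    have : ρ0 / 2 * (‖X‖ ^ 2 + ‖Y‖ ^ 2) - ρ0 * (‖X‖ * ‖Y‖) = ρ0 / 2 * (‖X‖ - ‖Y‖) ^ 2 := by ring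
    have : 0 ≤ ρ0 / 2 * (‖X‖ - ‖Y‖) ^ 2 := by positivity
    linarith
  have e : dist (nrm θ X) (nrm θ Y) = ‖‖X‖⁻¹ • X - ‖Y‖⁻¹ • Y‖ := by
    rw [Subtype.dist_eq, dist_eq_norm]
    simp [nrm, hX0, hY0]
  have n1 : ∀ {Z : Ed d}, Z ≠ 0 → ‖‖Z‖⁻¹ • Z‖ = 1 := fun {Z} hZ => norm_smul_inv_norm hZ
  rw [e]
  refine le_of_sq_le_sq ?_ hτ.le
  rw [@norm_sub_sq_real, n1 hX0, n1 hY0, inner_smul_left, inner_smul_right, he]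
  have : ρ0 ≤ ‖X‖⁻¹ * (‖Y‖⁻¹ * inner ℝ X Y) := by
    have : ρ0 = ‖X‖⁻¹ * (‖Y‖⁻¹ * (ρ0 * (‖X‖ * ‖Y‖))) := by field_simp
    rw [this]
    gcongr
  simp only [conj_trivial]
  linarith

end LSH

namespace LSH
open Set Filter Topology

/-- half of the diagonal value of J -/
def Wd (k η : ℝ) : ℝ := ∫ u in Ioi η, phi u * gaussTail (k * u)

lemma line_null (k : ℝ) : gam2.real {z : ℝ × ℝ | k * z.1 = z.2} = 0 := by
  have hm : MeasurableSet {z : ℝ × ℝ | k * z.1 = z.2} :=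
    measurableSet_eq_fun (by fun_prop) (by fun_prop)
  have : NullSingletonClass gam := nullSingletonClass_gaussianReal (by norm_num)
  rw [measureReal_def, (Measure.measure_prod_null hm).2]
  · rfl
  · refine Eventually.of_forall fun x => ?_
    have : Prod.mk x ⁻¹' {z : ℝ × ℝ | k * z.1 = z.2} = {k * x} := by
      ext y; simp [eq_comm]
    simp [this]

lemma J_diag {ρ s : ℝ} (hs : 0 < s) (hr : ρ ^ 2 + s ^ 2 = 1) (η : ℝ) :
    J ρ s (gaussTail η) (gaussTail η) = 2 * Wd ((1 - ρ) / s) η := by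
  set k := (1 - ρ) / s with hk
  have hkk : ∀ z : ℝ × ℝ, (k * z.1 ≤ z.2 ↔ z.1 ≤ ρ * z.1 + s * z.2) := fun z => by
    rw [hk, div_mul_eq_mul_div, div_le_iff₀ hs]
    constructor <;> intro h <;> linarith
  have hke : ∀ z : ℝ × ℝ, z.1 = ρ * z.1 + s * z.2 → k * z.1 = z.2 := fun z hz => by
    rw [hk, div_mul_eq_mul_div, div_eq_iff hs.ne']
    linarith
  set A := {z : ℝ × ℝ | η ≤ z.1 ∧ k * z.1 ≤ z.2} with hA
  set B := {z : ℝ × ℝ | η ≤ ρ * z.1 + s * z.2 ∧ ρ * z.1 + s * z.2 ≤ z.1} with hB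
  have mA : MeasurableSet A := by
    have h1 : MeasurableSet {z : ℝ × ℝ | η ≤ z.1} := measurableSet_le (by fun_prop) (by fun_prop)
    have h2 : MeasurableSet {z : ℝ × ℝ | k * z.1 ≤ z.2} := measurableSet_le (by fun_prop) (by fun_prop)
    exact h1.inter h2
  have mB : MeasurableSet B := by
    have h1 : MeasurableSet {z : ℝ × ℝ | η ≤ ρ * z.1 + s * z.2} := measurableSet_le (by fun_prop) (by fun_prop)
    have h2 : MeasurableSet {z : ℝ × ℝ | ρ * z.1 + s * z.2 ≤ z.1} := measurableSet_le (by fun_prop) (by fun_prop)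
    exact h1.inter h2
  have wA : gam2.real A = Wd k η := wedge_formula η (fun u => k * u) (by fun_prop)
  have wB : gam2.real B = gam2.real A := by
    rw [← (rot_mp hr).measureReal_preimage mA.nullMeasurableSet]
    congr 1
    ext z
    simp only [hA, hB, mem_preimage, mem_ofPred_eq]
    rw [hkk (ρ * z.1 + s * z.2, s * z.1 - ρ * z.2)]
    have : ρ * (ρ * z.1 + s * z.2) + s * (s * z.1 - ρ * z.2) = z.1 := by
      linear_combination z.1 * hr
    simp only [this]
  have hU : {z : ℝ × ℝ | η ≤ z.1 ∧ η ≤ ρ * z.1 + s * z.2} = A ∪ B := by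
    ext z
    simp only [hA, hB, mem_union, mem_ofPred_eq, hkk]
    constructor
    · rintro ⟨h1, h2⟩
      rcases le_total z.1 (ρ * z.1 + s * z.2) with h | h
      · exact Or.inl ⟨h1, h⟩
      · exact Or.inr ⟨h2, h⟩
    · rintro (⟨h1, h2⟩ | ⟨h1, h2⟩)
      · exact ⟨h1, h1.trans h2⟩
      · exact ⟨h1.trans h2, h1⟩
  have hI : gam2.real (A ∩ B) = 0 := by
    refine le_antisymm ?_ measureReal_nonneg
    rw [← line_null k]
    refine measureReal_mono fun z hz => ?_
    exact hke z (le_antisymm ((hkk z).1 hz.1.2) hz.2.2)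
  have := measureReal_union_add_inter (μ := gam2) (s := A) (t := B) mB
  rw [J_U, hU]
  linarith

/-- derivative of J along the diagonal -/
def gk (k r : ℝ) : ℝ := gaussTail (k * Q r)

lemma gk_U (k η : ℝ) : gk k (gaussTail η) = gaussTail (k * η) := by rw [gk, Q_U]

lemma gk_bdd (k r : ℝ) : |gk k r| ≤ 1 := by
  rw [gk, abs_of_pos (U_pos _)]; exact (U_lt_one _).le

lemma gk_mono {k : ℝ} (hk : 0 < k) : MonotoneOn (gk k) (Ioo 0 1) := by
  intro x hx y hy hxy
  have h : Q y ≤ Q x := by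
    rw [← U_strictAnti.le_iff_ge, U_Q hx.1 hx.2, U_Q hy.1 hy.2]; exact hxy
  exact U_strictAnti.antitone (mul_le_mul_of_nonneg_left h hk.le)

lemma U_mp : MeasurePreserving gaussTail gam (volume.restrict (Ioo (0:ℝ) 1)) := by
  refine ⟨U_measurable, ?_⟩
  have := Measure.isProbabilityMeasure_map (μ := gam) U_measurable.aemeasurable
  refine Measure.ext_of_Iic _ _ fun x => ?_
  rw [Measure.map_apply U_measurable measurableSet_Iic, Measure.restrict_apply measurableSet_Iic]
  have h := gam_U_le x
  have e : gaussTail ⁻¹' Iic x = {u | gaussTail u ≤ x} := rfl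
  rw [e, ← ofReal_measureReal, h]
  rcases le_or_gt 1 x with hx | hx
  · have : Iic x ∩ Ioo (0:ℝ) 1 = Ioo 0 1 := by
      ext y; simp only [mem_inter_iff, mem_Iic, mem_Ioo]
      exact ⟨fun h => h.2, fun h => ⟨by linarith [h.2], h⟩⟩
    rw [this, min_eq_right hx]; simp
  · have : Iic x ∩ Ioo (0:ℝ) 1 = Ioc 0 x := by
      ext y; simp only [mem_inter_iff, mem_Iic, mem_Ioo, mem_Ioc]
      exact ⟨fun h => ⟨h.2.1, h.1⟩, fun h => ⟨h.2, h.1, by linarith [h.2]⟩⟩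
    rw [this, min_eq_left hx.le]; simp

lemma gk_aem {k : ℝ} (hk : 0 < k) : AEStronglyMeasurable (gk k) (volume.restrict (Ioo (0:ℝ) 1)) :=
  (aemeasurable_restrict_of_monotoneOn measurableSet_Ioo (gk_mono hk)).aestronglyMeasurable

lemma Wd_eq {k : ℝ} (hk : 0 < k) (η : ℝ) : Wd k η = ∫ r in (0:ℝ)..gaussTail η, gk k r := by
  have hm : AEStronglyMeasurable ((Iic (gaussTail η)).indicator (gk k)) (volume.restrict (Ioo (0:ℝ) 1)) :=
    (gk_aem hk).indicator measurableSet_Iic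
  have h1 : Wd k η = ∫ u, (Iic (gaussTail η)).indicator (gk k) (gaussTail u) ∂gam := by
    rw [integral_gaussianReal_eq_integral_smul (by norm_num), Wd, ← integral_Ici_eq_integral_Ioi,
      ← integral_indicator measurableSet_Ici]
    congr 1
    funext u
    by_cases hu : η ≤ u
    · rw [indicator_of_mem (mem_Ici.2 hu), indicator_of_mem (mem_Iic.2 (U_strictAnti.antitone hu)), gk_U]
      rfl
    · rw [indicator_of_notMem (by simpa using hu), indicator_of_notMem]
      · simp
      · rw [mem_Iic, U_strictAnti.le_iff_ge]; exact hu
  rw [h1]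
  have := integral_map (μ := gam) U_measurable.aemeasurable (by rw [U_mp.map_eq]; exact hm)
  rw [← this, U_mp.map_eq, integral_indicator measurableSet_Iic, Measure.restrict_restrict measurableSet_Iic,
    intervalIntegral.integral_of_le (U_pos η).le]
  congr 2
  ext y; simp only [mem_inter_iff, mem_Iic, mem_Ioo, mem_Ioc]
  exact ⟨fun h => ⟨h.2.1, h.1⟩, fun h => ⟨h.2, h.1, by linarith [h.2, U_lt_one η]⟩⟩

lemma gk_scale_int {k a : ℝ} (hk : 0 < k) (ha : 0 < a) (ha1 : a ≤ 1) :
    IntervalIntegrable (fun v => gk k (a * v)) volume 0 1 := by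
  rw [intervalIntegrable_iff_integrableOn_Ioo_of_le zero_le_one]
  have hmono : MonotoneOn (fun v => gk k (a * v)) (Ioo 0 1) := by
    intro x hx y hy hxy
    refine gk_mono hk ⟨mul_pos ha hx.1, ?_⟩ ⟨mul_pos ha hy.1, ?_⟩ (mul_le_mul_of_nonneg_left hxy ha.le)
    · calc a * x ≤ 1 * x := by gcongr; exact hx.1.le
        _ < 1 := by linarith [hx.2]
    · calc a * y ≤ 1 * y := by gcongr; exact hy.1.le
        _ < 1 := by linarith [hy.2]
  have hm := (aemeasurable_restrict_of_monotoneOn (μ := volume) measurableSet_Ioo hmono).aestronglyMeasurable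
  refine Integrable.mono' (g := fun _ => 1) (integrable_const _) hm (Eventually.of_forall fun v => gk_bdd _ _)

lemma J_diag_scale {ρ s : ℝ} (hρ : ρ < 1) (hs : 0 < s) (hr : ρ ^ 2 + s ^ 2 = 1) {a : ℝ} (ha : 0 < a) (ha1 : a < 1) :
    J ρ s a a = 2 * a * ∫ v in (0:ℝ)..1, gk ((1 - ρ) / s) (a * v) := by
  have hk : 0 < (1 - ρ) / s := div_pos (by linarith) hs
  obtain ⟨η, rfl⟩ := U_surj ha ha1
  rw [J_diag hs hr, Wd_eq hk, intervalIntegral.integral_comp_mul_left _ ha.ne']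
  simp only [mul_zero, mul_one, smul_eq_mul]
  field_simp

lemma gk_concave {k : ℝ} (hk : 0 < k) (hk1 : k < 1) : ConcaveOn ℝ (Ioc 0 (1 / 2)) (gk k) := by
  have slope : ∀ a b : ℝ, b < a → ∃ ξ ∈ Ioo b a,
      (gaussTail (k * b) - gaussTail (k * a)) / (gaussTail b - gaussTail a) = k * exp ((1 - k ^ 2) * ξ ^ 2 / 2) := by
    intro a b h
    obtain ⟨ξ, hξ, e⟩ := exists_ratio_hasDerivAt_eq_ratio_slope (fun u => gaussTail (k * u))
      (fun u => -phi (k * u) * k) h (U_continuous.comp (continuous_const.mul continuous_id)).continuousOn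
      (fun x _ => by
        have h1 : HasDerivAt (fun u : ℝ => k * u) k x := by
          simpa using (hasDerivAt_id' x).const_mul k
        exact HasDerivAt.comp x (U_hasDerivAt (k * x)) h1) gaussTail (fun u => -phi u) U_continuous.continuousOn (fun x _ => U_hasDerivAt x)
    refine ⟨ξ, hξ, ?_⟩
    have hp : 0 < gaussTail b - gaussTail a := sub_pos.2 (U_strictAnti h)
    have e2 : phi (k * ξ) = exp ((1 - k ^ 2) * ξ ^ 2 / 2) * phi ξ := by
      rw [phi_eq, phi_eq, mul_left_comm, ← Real.exp_add]
      congr 2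
      ring
    simp only [e2] at e
    have hφ := phi_pos ξ
    rw [div_eq_iff hp.ne']
    have : phi ξ * (gaussTail (k * b) - gaussTail (k * a)) =
      phi ξ * (k * exp ((1 - k ^ 2) * ξ ^ 2 / 2) * (gaussTail b - gaussTail a)) := by linear_combination -e
    exact mul_left_cancel₀ hφ.ne' this
  refine concaveOn_of_slope_anti_adjacent (convex_Ioc _ _) ?_
  intro x y z hx hz hxy hyz
  obtain ⟨a, rfl⟩ := U_surj hx.1 (by linarith [hx.2])
  obtain ⟨c, rfl⟩ := U_surj hz.1 (by linarith [hz.2])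
  obtain ⟨b, rfl⟩ := U_surj (hx.1.trans hxy) (by linarith [hz.2])
  have hc : 0 ≤ c := by
    rw [← U_strictAnti.le_iff_ge, U_zero]; exact hz.2
  have hba : b < a := U_strictAnti.lt_iff_gt.1 hxy
  have hcb : c < b := U_strictAnti.lt_iff_gt.1 hyz
  obtain ⟨ξ, hξ, e1⟩ := slope a b hba
  obtain ⟨ζ, hζ, e2⟩ := slope b c hcb
  simp only [gk_U]
  rw [e1, e2]
  have h1 : ζ ^ 2 ≤ ξ ^ 2 := pow_le_pow_left₀ (by linarith [hζ.1]) (by linarith [hζ.2, hξ.1]) 2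
  have h2 : 0 ≤ 1 - k ^ 2 := by nlinarith
  gcongr

lemma jensen_J {ρ s : ℝ} (hρ0 : 0 < ρ) (hρ : ρ < 1) (hs : 0 < s) (hr : ρ ^ 2 + s ^ 2 = 1)
    {ι : Type*} (t : Finset ι) (l a : ι → ℝ) (hl : ∀ i ∈ t, 0 ≤ l i) (hsum : ∑ i ∈ t, l i * a i = 1)
    (ha : ∀ i ∈ t, 0 ≤ a i ∧ a i ≤ 1 / 2) :
    ∑ i ∈ t, l i * J ρ s (a i) (a i) ≤
      J ρ s (∑ i ∈ t, l i * a i * a i) (∑ i ∈ t, l i * a i * a i) / (∑ i ∈ t, l i * a i * a i) := by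
  have hk : 0 < (1 - ρ) / s := div_pos (by linarith) hs
  have hk1 : (1 - ρ) / s < 1 := by
    rw [div_lt_one hs]
    by_contra hh
    push Not at hh
    have : s ^ 2 ≤ (1 - ρ) ^ 2 := pow_le_pow_left₀ hs.le hh 2
    nlinarith
  set k := (1 - ρ) / s with hkd
  set t' := t.filter (fun i => 0 < a i) with ht'
  have z : ∀ i ∈ t, ¬ 0 < a i → a i = 0 := fun i hi h => le_antisymm (not_lt.1 h) (ha i hi).1
  have s1 : ∑ i ∈ t', l i * a i = 1 := by
    rw [← hsum, ht', Finset.sum_filter]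
    refine Finset.sum_congr rfl fun i hi => ?_
    split_ifs with h
    · rfl
    · rw [z i hi h]; simp
  have s2 : ∑ i ∈ t', l i * a i * a i = ∑ i ∈ t, l i * a i * a i := by
    rw [ht', Finset.sum_filter]
    refine Finset.sum_congr rfl fun i hi => ?_
    split_ifs with h
    · rfl
    · rw [z i hi h]; simp
  have s3 : ∑ i ∈ t', l i * J ρ s (a i) (a i) = ∑ i ∈ t, l i * J ρ s (a i) (a i) := by
    rw [ht', Finset.sum_filter]
    refine Finset.sum_congr rfl fun i hi => ?_
    split_ifs with h
    · rfl
    · rw [z i hi h, J_zero_left]; simp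
  rw [← s2, ← s3]
  have mem : ∀ i ∈ t', i ∈ t ∧ 0 < a i := fun i hi => by simpa [ht'] using hi
  have hla : ∀ i ∈ t', 0 ≤ l i * a i := fun i hi => mul_nonneg (hl i (mem i hi).1) (mem i hi).2.le
  set m := ∑ i ∈ t', l i * a i * a i with hm
  have hmI : m ∈ Ioc (0:ℝ) (1 / 2) := by
    have := (convex_Ioc (0:ℝ) (1/2)).sum_mem hla s1 (z := a) (fun i hi => ⟨(mem i hi).2, (ha i (mem i hi).1).2⟩)
    simpa using this
  rw [J_diag_scale hρ hs hr hmI.1 (by linarith [hmI.2])]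
  have e1 : ∑ i ∈ t', l i * J ρ s (a i) (a i) = 2 * ∫ v in (0:ℝ)..1, ∑ i ∈ t', l i * a i * gk k (a i * v) := by
    rw [intervalIntegral.integral_finsetSum, Finset.mul_sum]
    · refine Finset.sum_congr rfl fun i hi => ?_
      rw [J_diag_scale hρ hs hr (mem i hi).2 (by linarith [(ha i (mem i hi).1).2]),
        intervalIntegral.integral_const_mul]
      ring
    · intro i hi
      exact (gk_scale_int hk (mem i hi).2 (by linarith [(ha i (mem i hi).1).2])).const_mul _
  rw [e1, show 2 * m * (∫ v in (0:ℝ)..1, gk k (m * v)) / m = 2 * ∫ v in (0:ℝ)..1, gk k (m * v) by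
    have := hmI.1.ne'
    field_simp]
  refine mul_le_mul_of_nonneg_left ?_ (by norm_num)
  refine intervalIntegral.integral_mono_on_of_le_Ioo zero_le_one ?_ (gk_scale_int hk hmI.1 (by linarith [hmI.2])) ?_
  · have : IntervalIntegrable (∑ i ∈ t', fun v => l i * a i * gk k (a i * v)) volume 0 1 := 
      IntervalIntegrable.sum _ fun i hi =>
        (gk_scale_int hk (mem i hi).2 (by linarith [(ha i (mem i hi).1).2])).const_mul _
    convert this using 1
    funext v; simp
  · intro v hv
    have := (gk_concave hk hk1).le_map_sum hla s1 (p := fun i => a i * v) (fun i hi =>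
      ⟨mul_pos (mem i hi).2 hv.1, by
        have h1 := (ha i (mem i hi).1).2
        have h2 := (mem i hi).2
        nlinarith [hv.1, hv.2]⟩)
    simp only [smul_eq_mul] at this
    rw [hm, Finset.sum_mul]
    simpa only [mul_assoc] using this

lemma U_close {k k' u : ℝ} (hk' : 0 < k') (hkk : k' ≤ k) (hu : 0 ≤ u) :
    gaussTail (k' * u) - gaussTail (k * u) ≤ (k - k') / k' := by
  rcases (mul_le_mul_of_nonneg_right hkk hu).eq_or_lt with h | h
  · rw [h, sub_self]
    exact div_nonneg (by linarith) hk'.le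
  obtain ⟨ξ, hξ, e⟩ := exists_hasDerivAt_eq_slope gaussTail (fun x => -phi x) h
      U_continuous.continuousOn (fun x _ => U_hasDerivAt x)
  rw [eq_div_iff (by linarith)] at e
  have e3 : ξ * phi ξ ≤ 1 := by
    have h0 : 0 ≤ ξ := le_trans (by positivity) hξ.1.le
    rw [phi_eq]
    have h1 : (√(2 * π))⁻¹ ≤ 1 := by
      apply inv_le_one_of_one_le₀
      rw [Real.one_le_sqrt]
      linarith [Real.pi_gt_three]
    have h2 : ξ * exp (-ξ ^ 2 / 2) ≤ 1 := by
      rw [neg_div, Real.exp_neg, ← div_eq_mul_inv, div_le_one (exp_pos _)]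
      have := Real.add_one_le_exp (ξ ^ 2 / 2)
      nlinarith [sq_nonneg (ξ - 1)]
    have h3 : 0 ≤ ξ * exp (-ξ ^ 2 / 2) := by positivity
    calc ξ * ((√(2 * π))⁻¹ * exp (-ξ ^ 2 / 2)) = (√(2 * π))⁻¹ * (ξ * exp (-ξ ^ 2 / 2)) := by ring
      _ ≤ 1 * 1 := by gcongr
      _ = 1 := by norm_num
  rw [le_div_iff₀ hk']
  have h4 : k' * u * phi ξ ≤ 1 := le_trans (mul_le_mul_of_nonneg_right hξ.1.le (phi_pos ξ).le) e3
  calc (gaussTail (k' * u) - gaussTail (k * u)) * k' = (k - k') * (k' * u * phi ξ) := by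
        linear_combination k' * e
    _ ≤ (k - k') * 1 := mul_le_mul_of_nonneg_left h4 (by linarith)
    _ = _ := by ring

lemma J_close {ρ s ρ' s' : ℝ} (hs : 0 < s) (hr : ρ ^ 2 + s ^ 2 = 1)
    (hs' : 0 < s') (hr' : ρ' ^ 2 + s' ^ 2 = 1) (hρ' : ρ' < 1) (hkk : (1 - ρ') / s' ≤ (1 - ρ) / s)
    {a : ℝ} (ha : 0 ≤ a) (ha1 : a ≤ 1 / 2) :
    J ρ' s' a a ≤ J ρ s a a + 2 * (((1 - ρ) / s - (1 - ρ') / s') / ((1 - ρ') / s')) * a := by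
  have hk' : 0 < (1 - ρ') / s' := div_pos (by linarith) hs'
  rcases ha.eq_or_lt with h | h
  · rw [← h, J_zero_left, J_zero_left]; simp
  obtain ⟨η, rfl⟩ := U_surj h (by linarith)
  have hη : 0 ≤ η := by rw [← U_strictAnti.le_iff_ge, U_zero]; exact ha1
  rw [J_diag hs hr, J_diag hs' hr']
  set k := (1 - ρ) / s
  set k' := (1 - ρ') / s'
  set c := (k - k') / k'
  have : Wd k' η ≤ Wd k η + c * gaussTail η := by
    have i1 := phiU_integrable (fun u => k * u) (by fun_prop)
    have i2 := phiU_integrable (fun u => k' * u) (by fun_prop)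
    have i3 := phi_integrable
    rw [Wd, Wd, U_eq_Ioi, ← integral_const_mul, ← integral_add i1.integrableOn (i3.integrableOn.const_mul c)]
    refine setIntegral_mono_on i2.integrableOn (by exact i1.integrableOn.add (i3.integrableOn.const_mul c)) measurableSet_Ioi ?_
    intro u hu
    have h1 := U_close hk' hkk (le_trans hη (le_of_lt hu))
    have h2 := mul_le_mul_of_nonneg_left h1 (phi_pos u).le
    have : phi u * c = c * phi u := mul_comm _ _
    linarith
  linarith

end LSH

namespace LSH
open Set Filter Topology

lemma exists_rho {ρ s : ℝ} (h0 : 0 < ρ) (h1 : ρ < 1) (hs : 0 < s) (hr : ρ ^ 2 + s ^ 2 = 1) {ε : ℝ} (hε : 0 < ε) :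
    ∃ ρ' s' : ℝ, ρ < ρ' ∧ ρ' < 1 ∧ 0 < s' ∧ ρ' ^ 2 + s' ^ 2 = 1 ∧ (1 - ρ') / s' ≤ (1 - ρ) / s ∧
      2 * (((1 - ρ) / s - (1 - ρ') / s') / ((1 - ρ') / s')) ≤ ε := by
  have hs' : s = √(1 - ρ ^ 2) := by rw [← hr]; simp [Real.sqrt_sq hs.le]
  set k := (1 - ρ) / s with hk
  have hkp : 0 < k := div_pos (by linarith) hs
  have hc : ContinuousAt (fun r : ℝ => 2 * ((k - (1 - r) / √(1 - r ^ 2)) / ((1 - r) / √(1 - r ^ 2)))) ρ := by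
    have hq : ContinuousAt (fun r : ℝ => (1 - r) / √(1 - r ^ 2)) ρ := by
      refine ContinuousAt.div (by fun_prop) (by fun_prop) ?_
      rw [← hs']; exact hs.ne'
    refine continuousAt_const.mul (ContinuousAt.div (continuousAt_const.sub hq) hq ?_)
    rw [← hs', ← hk]; exact hkp.ne'
  have hv : (fun r : ℝ => 2 * ((k - (1 - r) / √(1 - r ^ 2)) / ((1 - r) / √(1 - r ^ 2)))) ρ < ε := by
    simp only [← hs', ← hk]; simpa using hε
  have ev1 := (hc.eventually_lt continuousAt_const hv).filter_mono (nhdsWithin_le_nhds (s := Ioi ρ))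
  have ev2 : ∀ᶠ r in 𝓝[>] ρ, r < 1 := (eventually_lt_nhds h1).filter_mono nhdsWithin_le_nhds
  obtain ⟨r, ⟨e1, e2⟩, e3⟩ := ((ev1.and ev2).and self_mem_nhdsWithin).exists
  have e3 : ρ < r := e3
  have hpos : 0 < 1 - r ^ 2 := by nlinarith
  refine ⟨r, √(1 - r ^ 2), e3, e2, Real.sqrt_pos.2 hpos, by rw [Real.sq_sqrt hpos.le]; ring, ?_, e1.le⟩
  rw [hk, div_le_div_iff₀ (Real.sqrt_pos.2 hpos) hs]
  refine le_of_sq_le_sq ?_ (mul_nonneg (by linarith) (Real.sqrt_nonneg _))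
  rw [mul_pow, mul_pow, Real.sq_sqrt hpos.le, show s ^ 2 = 1 - ρ ^ 2 by linarith]
  have : (1 - ρ) ^ 2 * (1 - r ^ 2) - (1 - r) ^ 2 * (1 - ρ ^ 2) = (1 - r) * (1 - ρ) * (2 * (r - ρ)) := by ring
  have h2 : 0 ≤ (1 - r) * (1 - ρ) * (2 * (r - ρ)) :=
    mul_nonneg (mul_nonneg (by linarith) (by linarith)) (by linarith)
  linarith

lemma sphere_prob (d : ℕ) (hd : 1 ≤ d) (θ : Sp d) : IsProbabilityMeasure (sphereMeasure d) := by
  constructor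
  rw [← sphere_law d hd θ MeasurableSet.univ]
  simp

lemma coll_eq {α : Type*} [MeasurableSpace α] (μ : Measure α) [IsProbabilityMeasure μ] {T : ℕ} (h : α → Fin T)
    (hm : Measurable h) :
    ((μ.prod μ) {uv | h uv.1 = h uv.2}).toReal = ∑ t, μ.real {x | h x = t} * μ.real {x | h x = t} := by
  have hA : ∀ t, MeasurableSet {x | h x = t} := fun t => hm (measurableSet_singleton t)
  have e : {uv : α × α | h uv.1 = h uv.2} = ⋃ t ∈ (Finset.univ : Finset (Fin T)), {x | h x = t} ×ˢ {x | h x = t} := by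
    ext uv
    simp [eq_comm]
  rw [e, ← measureReal_def, measureReal_biUnion_finset]
  · simp only [measureReal_prod_prod]
  · intro t _ t' _ htt
    rw [Function.onFun, Set.disjoint_left]
    rintro ⟨u, v⟩ h1 h2
    exact htt (h1.1.symm.trans h2.1)
  · exact fun t _ => (hA t).prod (hA t)

lemma level_sum {α : Type*} [MeasurableSpace α] (μ : Measure α) [IsProbabilityMeasure μ] {T : ℕ} (h : α → Fin T)
    (hm : Measurable h) : ∑ t, μ.real {x | h x = t} = 1 := by
  have hA : ∀ t, MeasurableSet {x | h x = t} := fun t => hm (measurableSet_singleton t)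
  have e : (univ : Set α) = ⋃ t ∈ (Finset.univ : Finset (Fin T)), {x | h x = t} := by
    ext x
    simp
  rw [← probReal_univ (μ := μ), e, measureReal_biUnion_finset]
  · intro t _ t' _ htt
    rw [Function.onFun, Set.disjoint_left]
    intro u h1 h2
    exact htt (h1.symm.trans h2)
  · exact fun t _ => hA t

set_option maxHeartbeats 1000000 in
lemma core {τ ρ0 s0 ρ s : ℝ} (hτ : 0 < τ) (h0 : 0 < ρ0) (he : τ ^ 2 = 2 - 2 * ρ0)
    (hs0 : 0 < s0) (hr0 : ρ0 ^ 2 + s0 ^ 2 = 1)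
    (hρ : ρ0 < ρ) (hρ1 : ρ < 1) (hs : 0 < s) (hr : ρ ^ 2 + s ^ 2 = 1)
    (hkk : (1 - ρ) / s ≤ (1 - ρ0) / s0)
    {d : ℕ} (hd : 1 ≤ d) {T m : ℕ} (w : Fin m → ℝ) (h : Fin m → (Sp d → Fin T))
    (hw : ∀ i, 0 ≤ w i) (hw1 : ∑ i, w i = 1) (hm : ∀ i, Measurable (h i))
    (hhalf : ∀ (i : Fin m) (t : Fin T), sphereMeasure d {x | h i x = t} ≤ 1 / 2) 
    (η : ℝ) (hη : gaussTail η = ∑ i, w i *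
                (((sphereMeasure d).prod (sphereMeasure d))
                  {uv | h i uv.1 = h i uv.2}).toReal)
    (p₁ : ℝ) (hp : ∀ p q : Sp d, dist p q ≤ τ →
            p₁ ≤ ∑ i, w i * (if h i p = h i q then (1 : ℝ) else 0)) :
    p₁ ≤ J ρ0 s0 (gaussTail η) (gaussTail η) / gaussTail η +
      2 * (((1 - ρ0) / s0 - (1 - ρ) / s) / ((1 - ρ) / s)) +
      (piG d).real {ω | ∑ i, qf ρ0 ρ s (ω i) ≤ 0} := by
  have : Nonempty (Fin d) := ⟨⟨0, hd⟩⟩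
  have : Nontrivial (Ed d) := inferInstance
  obtain ⟨θ⟩ : Nonempty (Sp d) := (NormedSpace.sphere_nonempty.2 zero_le_one).to_subtype
  have := sphere_prob d hd θ
  set c := 2 * (((1 - ρ0) / s0 - (1 - ρ) / s) / ((1 - ρ) / s)) with hc
  set a : Fin m → Fin T → ℝ := fun i t => (sphereMeasure d).real {x | h i x = t} with ha
  have mA : ∀ i t, MeasurableSet {x | h i x = t} := fun i t => hm i (measurableSet_singleton t)
  have mlp : Measurable (WithLp.toLp 2 : (Fin d → ℝ) → Ed d) := (PiLp.volume_preserving_toLp (Fin d)).measurable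
  have mN : Measurable (fun x : Fin d → ℝ => nrm θ (WithLp.toLp 2 x)) := (nrm_meas θ).comp mlp
  set A : Fin m → Fin T → Set (Fin d → ℝ) := fun i t => {x | h i (nrm θ (WithLp.toLp 2 x)) = t} with hA
  have mA' : ∀ i t, MeasurableSet (A i t) := fun i t => mN (mA i t)
  have Aa : ∀ i t, (Measure.pi fun _ : Fin d => gam).real (A i t) = a i t := fun i t => by
    rw [ha]
    simp only [measureReal_def]
    congr 1
    exact sphere_law d hd θ (mA i t)
  have a0 : ∀ i t, 0 ≤ a i t := fun i t => measureReal_nonneg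
  have a2 : ∀ i t, a i t ≤ 1 / 2 := fun i t => by
    have := ENNReal.toReal_mono (by norm_num) (hhalf i t)
    simpa [ha, measureReal_def] using this
  have asum : ∀ i, ∑ t, a i t = 1 := fun i => level_sum _ (h i) (hm i)
  have hη' : gaussTail η = ∑ i, ∑ t, w i * a i t * a i t := by
    rw [hη]
    refine Finset.sum_congr rfl fun i _ => ?_
    rw [coll_eq _ (h i) (hm i), Finset.mul_sum]
    exact Finset.sum_congr rfl fun t _ => by simp only [ha]; ring
  -- events
  set E : Fin m → Fin T → Set (Fin d → ℝ × ℝ) := fun i t =>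
    {ω | (fun j => (ω j).1) ∈ A i t ∧ (fun j => ρ * (ω j).1 + s * (ω j).2) ∈ A i t} with hE
  have mE : ∀ i t, MeasurableSet (E i t) := fun i t =>
    ((X_mp d).measurable (mA' i t)).inter ((Y_mp hr d).measurable (mA' i t))
  set B : Set (Fin d → ℝ × ℝ) := {ω | ∑ i, qf ρ0 ρ s (ω i) ≤ 0} with hB
  have mB : MeasurableSet B := by
    refine measurableSet_le ?_ (by fun_prop)
    unfold qf
    fun_prop
  have hE1 : ∀ i t, (piG d).real (E i t) ≤ J ρ s (a i t) (a i t) := fun i t => by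
    have := borell_set (by linarith) hs hr (mA' i t)
    rwa [Aa] at this
  have hp1 : p₁ ≤ 1 := by
    have := hp θ θ (by simpa using hτ.le)
    simpa [hw1] using this
  have pt : ∀ ω : Fin d → ℝ × ℝ, p₁ ≤ (∑ i, w i * ∑ t, (E i t).indicator (1 : (Fin d → ℝ × ℝ) → ℝ) ω) + B.indicator (1 : (Fin d → ℝ × ℝ) → ℝ) ω := by
    intro ω
    by_cases hω : ω ∈ B
    · rw [indicator_of_mem hω]
      have : 0 ≤ ∑ i, w i * ∑ t, (E i t).indicator (1 : (Fin d → ℝ × ℝ) → ℝ) ω :=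
        Finset.sum_nonneg fun i _ => mul_nonneg (hw i) (Finset.sum_nonneg fun t _ =>
          indicator_nonneg (fun _ _ => zero_le_one) _)
      simp only [Pi.one_apply]
      linarith
    · rw [indicator_of_notMem hω, add_zero]
      have hq : 0 < ∑ i, qf ρ0 ρ s (ω i) := not_le.1 hω
      have := hp _ _ (close_of_pos hτ h0 he θ (fun j => (ω j).1) (fun j => ρ * (ω j).1 + s * (ω j).2) hq)
      refine this.trans (Finset.sum_le_sum fun i _ => mul_le_mul_of_nonneg_left ?_ (hw i))
      split_ifs with hh
      · refine le_trans (le_of_eq ?_) (Finset.single_le_sum (f := fun t => (E i t).indicator (1 : (Fin d → ℝ × ℝ) → ℝ) ω)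
          (fun t _ => indicator_nonneg (fun _ _ => zero_le_one) _)
          (Finset.mem_univ (h i (nrm θ (WithLp.toLp 2 fun j => (ω j).1)))))
        simp only
        rw [indicator_of_mem]
        · rfl
        · exact ⟨rfl, hh.symm⟩
      · exact Finset.sum_nonneg fun t _ => indicator_nonneg (fun _ _ => zero_le_one) _
  have iE : ∀ i t, Integrable ((E i t).indicator (1 : (Fin d → ℝ × ℝ) → ℝ)) (piG d) := fun i t =>
    (integrable_const (1:ℝ)).indicator (mE i t)
  have iB : Integrable (B.indicator (1 : (Fin d → ℝ × ℝ) → ℝ)) (piG d) := (integrable_const (1:ℝ)).indicator mB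
  have iE1 : ∀ i, Integrable (fun ω => w i * ∑ t, (E i t).indicator (1 : (Fin d → ℝ × ℝ) → ℝ) ω) (piG d) := fun i =>
    (integrable_finsetSum _ fun t _ => iE i t).const_mul _
  have step1 : p₁ ≤ (∑ i, w i * ∑ t, (piG d).real (E i t)) + (piG d).real B := by
    have := integral_mono (μ := piG d) (integrable_const p₁)
      (by exact (integrable_finsetSum _ fun i _ => iE1 i).add iB) pt
    rw [integral_add (integrable_finsetSum _ fun i _ => iE1 i) iB, integral_finsetSum _ (fun i _ => iE1 i),
      integral_indicator_one mB, integral_const] at this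
    simp only [probReal_univ, one_smul] at this
    refine this.trans (le_of_eq ?_)
    congr 1
    refine Finset.sum_congr rfl fun i _ => ?_
    rw [integral_const_mul, integral_finsetSum _ fun t _ => iE i t]
    congr 1
    exact Finset.sum_congr rfl fun t _ => integral_indicator_one (mE i t)
  have step2 : ∑ i, w i * ∑ t, (piG d).real (E i t) ≤ ∑ i, w i * ∑ t, (J ρ0 s0 (a i t) (a i t) + c * a i t) := by
    refine Finset.sum_le_sum fun i _ => mul_le_mul_of_nonneg_left (Finset.sum_le_sum fun t _ => ?_) (hw i)
    exact (hE1 i t).trans (J_close hs0 hr0 hs hr hρ1 hkk (a0 i t) (a2 i t))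
  have step3 : ∑ i, w i * ∑ t, (J ρ0 s0 (a i t) (a i t) + c * a i t) =
      (∑ i, ∑ t, w i * J ρ0 s0 (a i t) (a i t)) + c := by
    simp only [Finset.sum_add_distrib, ← Finset.mul_sum, asum, mul_add, mul_one]
    rw [← Finset.sum_mul, hw1, one_mul]
  have step4 : ∑ i, ∑ t, w i * J ρ0 s0 (a i t) (a i t) ≤ J ρ0 s0 (gaussTail η) (gaussTail η) / gaussTail η := by
    have := jensen_J h0 (by linarith) hs0 hr0 (Finset.univ : Finset (Fin m × Fin T)) (fun x => w x.1)
      (fun x => a x.1 x.2) (fun x _ => hw x.1) (by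
        rw [Fintype.sum_prod_type]
        simp only [← Finset.mul_sum, asum, mul_one, hw1]) (fun x _ => ⟨a0 _ _, a2 _ _⟩)
    simp only [Fintype.sum_prod_type] at this
    rw [hη']
    exact this
  linarith

end LSH

/-- Lower bound for LSH on the sphere: for `0 < τ < √2`, `T ≥ 1` and `ε > 0` there is `d₀`
such that for all `d ≥ d₀` and every finitely supported family of hash functions on `S^{d-1}`
taking at most `T` values, all of whose level sets have measure at most `1/2`, if `η` satisfies
`Φ_c(η) = p₂* = Σᵢ wᵢ Pr_{u,v}[hᵢ(u) = hᵢ(v)]`, then any `p₁` that lower-bounds the collision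
probability `Σᵢ wᵢ 1[hᵢ(p) = hᵢ(q)]` over all pairs at distance at most `τ` satisfies
`p₁ ≤ Λ(τ, η) + ε`. -/
theorem lsh_lower_bound (τ : ℝ) (hτ0 : 0 < τ) (hτ : τ < Real.sqrt 2)
    (T : ℕ) (hT : 1 ≤ T) (ε : ℝ) (hε : 0 < ε) :
    ∃ d₀ : ℕ, ∀ d : ℕ, d₀ ≤ d →
      ∀ (m : ℕ) (w : Fin m → ℝ)
        (h : Fin m → (Metric.sphere (0 : EuclideanSpace ℝ (Fin d)) 1 → Fin T)),
        (∀ i, 0 ≤ w i) → (∑ i, w i = 1) →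
        (∀ i, Measurable (h i)) →
        (∀ (i : Fin m) (t : Fin T), sphereMeasure d {x | h i x = t} ≤ 1 / 2) →
        ∀ η : ℝ,
          gaussTail η
            = ∑ i, w i *
                (((sphereMeasure d).prod (sphereMeasure d))
                  {uv | h i uv.1 = h i uv.2}).toReal →
        ∀ p₁ : ℝ,
          (∀ p q : Metric.sphere (0 : EuclideanSpace ℝ (Fin d)) 1, dist p q ≤ τ →
            p₁ ≤ ∑ i, w i * (if h i p = h i q then (1 : ℝ) else 0)) →
          p₁ ≤ lambdaFn τ η + ε := by
  have hτ2 : τ ^ 2 < 2 := by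
    have := pow_lt_pow_left₀ hτ hτ0.le (n := 2) (by norm_num)
    rwa [Real.sq_sqrt (by norm_num)] at this
  have hτp : 0 < τ ^ 2 := by positivity
  have hpos : 0 < τ ^ 2 - τ ^ 4 / 4 := by
    have : τ ^ 2 - τ ^ 4 / 4 = τ ^ 2 * (1 - τ ^ 2 / 4) := by ring
    rw [this]
    exact mul_pos hτp (by linarith)
  have h0 : 0 < 1 - τ ^ 2 / 2 := by linarith
  have h1 : 1 - τ ^ 2 / 2 < 1 := by linarith
  have hs0 : 0 < Real.sqrt (τ ^ 2 - τ ^ 4 / 4) := Real.sqrt_pos.2 hpos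
  have hr0 : (1 - τ ^ 2 / 2) ^ 2 + Real.sqrt (τ ^ 2 - τ ^ 4 / 4) ^ 2 = 1 := by
    rw [Real.sq_sqrt hpos.le]; ring
  obtain ⟨ρ, s, hρ, hρ1, hs, hr, hkk, hc⟩ := LSH.exists_rho h0 h1 hs0 hr0 (half_pos hε)
  set V := Var[LSH.qf (1 - τ ^ 2 / 2) ρ s; LSH.gam2] / (ρ - (1 - τ ^ 2 / 2)) ^ 2 with hV
  refine ⟨max 1 ⌈V / (ε / 2)⌉₊, ?_⟩
  intro d hd m w h hw hw1 hm hhalf η hη p₁ hp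
  have hd1 : 1 ≤ d := le_trans (le_max_left _ _) hd
  have hd2 : V / (ε / 2) ≤ d :=
    (Nat.le_ceil _).trans (by exact_mod_cast le_trans (le_max_right _ _) hd)
  have hdp : (0 : ℝ) < d := by exact_mod_cast hd1
  have key := LSH.core hτ0 h0 (by ring) hs0 hr0 hρ hρ1 hs hr hkk hd1 w h hw hw1 hm hhalf η hη p₁ hp
  have hb := LSH.bad_small hr hρ d hd1
  rw [← hV] at hb
  have hb2 : V / d ≤ ε / 2 := by
    rw [div_le_iff₀ (half_pos hε)] at hd2
    rw [div_le_iff₀ hdp]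
    linarith
  have hl : LSH.J (1 - τ ^ 2 / 2) (Real.sqrt (τ ^ 2 - τ ^ 4 / 4)) (gaussTail η) (gaussTail η) / gaussTail η
      = lambdaFn τ η := by
    rw [LSH.J_U]; rfl
  rw [hl] at key
  linarith
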